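/- For the random walk in an i.i.d. random environment on Z^d (d ≥ 2) and any ℓ ∈ R^d \ {0}, there exist deterministic real numbers v_+(ℓ) and v_-(ℓ) such that P-almost surely lim_{n→∞} (X_n·ℓ)/n exists and equals v_+(ℓ)·1_{A_+(ℓ)} + v_-(ℓ)·1_{A_-(ℓ)}; in particular the limit is 0 on the complement of A_+(ℓ) ∪ A_-(ℓ). -/

import Mathlib

/-!
The proof works with the law `Q` of the sequence of steps of the annealed walk, a measure on
`ℕ → E` with `E = Fin d × Bool`, and with the level of the walk, a multiple of `X_n · ℓ` scaled so
that steps change it by at most `1`. Only two consequences of the i.i.d. environment are used, and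
they are collected in `RWLaw.Hyp`. The first is independence of the environment on disjoint sets of
sites (`lintegral_wt_mul`): from a strict record of the level onwards, the walk sees a fresh
environment until it goes below the record. The second is a bound for walks which make exactly `b`
steps at levels at least `k` and then follow a path that stays above its starting level: up to a
factor `(#E)^b`, which pays for guessing these `b` steps, such a path costs no more than in a fresh
environment. It follows from independence and Kraft's inequality (`kraft`, `tsum_Mid_le`,
`Hyp.of_env`). No ellipticity is needed.

Let `V0` be the event that the level stays nonnegative and is unbounded above. A cut time is a strict
record time after which the walk is, seen from there, in `V0`.

If `Q V0 > 0`, then every walk that is unbounded above has cut times at arbitrarily high levels, since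
each fresh record has a fixed chance of being one (`Hyp.exists_cut`). Given that the origin is a cut
point, the segments between successive cut times are i.i.d. (`Hyp.regen`, `Hyp.slln`). The mean
height gain of a segment is always finite by a renewal estimate: every level is straddled by at most
one segment, while a segment with a given gain starts near a given level with probability bounded
below (`Hyp.sum_Gain_le`, `Hyp.integrable_gain`). So the level grows with the deterministic speed
(mean gain) / (mean duration), which is `0` when the mean duration is infinite (`Hyp.lln_Om`).

If `Q V0 = 0`, then climbing by `L` without backtracking has a probability that tends to `0` as
`L → ∞` (`Hyp.tendsto_Up`). Scales `L 0 < L 1 < ...` can be chosen to grow so fast that a climb at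
scale `L (i + 1)` is still unlikely when it is preceded by up to `B i = 2 ^ (i + 2) * C * L i` freely
chosen steps (`Hyp.exists_scales`). A walk that reaches level `u` by time `C * u` spends
little time in most slabs `[k, k + L i)`, and then, by a pigeonhole argument over `4 * C` scales,
about half of the levels `k < u` have such a climb shortly after the first passage of `k`
(`Esc_of_good`, `count_Esc`). Along levels far enough apart these unlikely events are dominated by
independent ones (`prob_spaced_le`), so that this has exponentially small probability (`Hyp.fast_le`).
By Borel-Cantelli the level almost surely grows at most sublinearly (`Hyp.ae_slow`).

Both cases give, almost surely, a deterministic speed where `X_n · ℓ → ∞`, and an upper bound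
`X_n · ℓ ≤ o(n)` elsewhere (`OneSided`). This statement for `ℓ` and for `-ℓ` together is the theorem.
-/

open MeasureTheory Filter Set Topology
open scoped Classical ENNReal

noncomputable section

/-- Lattice sites of `ℤ^d`. -/
abbrev Site (d : ℕ) := Fin d → ℤ

/-- The `2d` unit vectors `±e_i` of `ℤ^d`, indexed by `Fin d × Bool`
(`true` for `+e_i`, `false` for `-e_i`). -/
def stepVec (d : ℕ) (i : Fin d × Bool) : Site d :=
  if i.2 = true then Pi.single i.1 1 else -Pi.single i.1 1

/-- An element of `𝒫`: a probability measure on the set `E` of unit vectors of `ℤ^d`,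
recorded via its probability mass function on lattice vectors. -/
structure EnvDist (d : ℕ) where
  prob : Site d → ℝ
  nonneg : ∀ v, 0 ≤ prob v
  support : ∀ v, prob v ≠ 0 → ∃ i, v = stepVec d i
  total : ∑ i : Fin d × Bool, prob (stepVec d i) = 1

instance {d : ℕ} : MeasurableSpace (EnvDist d) :=
  MeasurableSpace.comap EnvDist.prob inferInstance

/-- Environments: an element of `𝒫` at every site. -/
abbrev EnvOmega (d : ℕ) := Site d → EnvDist d

/-- Path space for the walk. -/
abbrev PathSpace (d : ℕ) := ℕ → Site d

/-- Sample space for the annealed walk: environment together with path. -/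
abbrev RWSpace (d : ℕ) := EnvOmega d × PathSpace d

/-- Dot product of a lattice vector with a real vector. -/
def dotR {d : ℕ} (x : Site d) (l : Fin d → ℝ) : ℝ := ∑ i, (x i : ℝ) * l i

/-- Dot product of two lattice vectors. -/
def dotZ {d : ℕ} (x y : Site d) : ℤ := ∑ i, x i * y i

/-- Quenched probability that the walk follows the steps of `x` for its first `n` steps. -/
def pathWeight {d : ℕ} (ω : EnvOmega d) (n : ℕ) (x : ℕ → Site d) : ℝ :=
  ∏ k ∈ Finset.range n, (ω (x k)).prob (x (k + 1) - x k)

/-- `ν` is the product measure `μ^{⊗ℤ^d}`, i.e. the coordinates are i.i.d. with law `μ`. -/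
def IsIIDEnv {d : ℕ} (μ : Measure (EnvDist d)) (ν : Measure (EnvOmega d)) : Prop :=
  IsProbabilityMeasure μ ∧ IsProbabilityMeasure ν ∧
    ∀ (s : Finset (Site d)) (A : Site d → Set (EnvDist d)),
      (∀ x ∈ s, MeasurableSet (A x)) →
      ν {ω | ∀ x ∈ s, ω x ∈ A x} = ∏ x ∈ s, μ (A x)

/-- `P` is the annealed law of the RWRE started at the origin in an i.i.d. environment
with marginal `μ`: the environment marginal is the i.i.d. product, and the cylinder
probabilities are given by averaging the quenched Markov-chain probabilities. -/
def IsRWRE {d : ℕ} (μ : Measure (EnvDist d)) (P : Measure (RWSpace d)) : Prop :=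
  IsProbabilityMeasure P ∧ IsIIDEnv μ (P.map Prod.fst) ∧
    ∀ (n : ℕ) (x : ℕ → Site d) (A : Set (EnvOmega d)), MeasurableSet A →
      (P {q | q.1 ∈ A ∧ ∀ k ≤ n, q.2 k = x k}).toReal =
        (if x 0 = 0 then (1 : ℝ) else 0) * ∫ ω in A, pathWeight ω n x ∂(P.map Prod.fst)

/-- `Q` is the quenched law `ℙ_ω` of the walk in the fixed environment `ω`, started at the
origin. -/
def IsQuenchedRW {d : ℕ} (ω : EnvOmega d) (Q : Measure (PathSpace d)) : Prop :=
  IsProbabilityMeasure Q ∧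
    ∀ (n : ℕ) (x : ℕ → Site d),
      (Q {w | ∀ k ≤ n, w k = x k}).toReal =
        (if x 0 = 0 then (1 : ℝ) else 0) * pathWeight ω n x

/-- `x → y`: there is a directed path from `x` to `y` in the graph `G(ω)`. -/
def Reaches {d : ℕ} (ω : EnvOmega d) : Site d → Site d → Prop :=
  Relation.ReflTransGen (fun a b => 0 < (ω a).prob (b - a))

/-- The forward cluster `C_x`. -/
def clusterC {d : ℕ} (ω : EnvOmega d) (x : Site d) : Set (Site d) := {y | Reaches ω x y}

/-- The mutually connected cluster `M_x = C_x ∩ B_x`. -/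
def clusterM {d : ℕ} (ω : EnvOmega d) (x : Site d) : Set (Site d) :=
  {y | Reaches ω x y ∧ Reaches ω y x}

/-- The local drift `u = ∑_e γ(e) e` of an environment value `γ`. -/
def drift {d : ℕ} (γ : EnvDist d) : Fin d → ℝ :=
  fun i => ∑ k : Fin d × Bool, γ.prob (stepVec d k) * ((stepVec d k i : ℤ) : ℝ)

/-- `N_n`: the number of times before time `n` at which the walk sits on a site whose
environment equals `γ`. -/
def envCount {d : ℕ} (γ : EnvDist d) (q : RWSpace d) (n : ℕ) : ℕ :=
  Set.ncard {m : ℕ | m < n ∧ q.1 (q.2 m) = γ}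

end

set_option linter.unusedSectionVars false

namespace RWLaw

/-! ### Cylinders of step sequences -/

section Basics

variable {E : Type*}

/-- The time shift by `n` on step sequences. -/
def shf (n : ℕ) (s : ℕ → E) : ℕ → E := fun i => s (n + i)

/-- The list of the first `n` steps of a sequence. -/
def pre (s : ℕ → E) (n : ℕ) : List E := (List.range n).map s

/-- The cylinder of all step sequences that begin with the list `l`. -/
def cyl (l : List E) : Set (ℕ → E) := {s | pre s l.length = l}

@[simp] lemma pre_length (s : ℕ → E) (n : ℕ) : (pre s n).length = n := by simp [pre]

@[simp] lemma pre_zero (s : ℕ → E) : pre s 0 = [] := by simp [pre]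

lemma pre_take (s : ℕ → E) {j n : ℕ} (h : j ≤ n) : (pre s n).take j = pre s j := by
  rw [pre, ← List.map_take, List.take_range, min_eq_left h]; rfl

lemma pre_add (s : ℕ → E) (n m : ℕ) : pre s (n + m) = pre s n ++ pre (shf n s) m := by
  simp [pre, List.range_add, shf, Function.comp_def]

lemma shf_shf (n m : ℕ) (s : ℕ → E) : shf m (shf n s) = shf (n + m) s := by
  funext i; simp [shf, add_assoc]

@[simp] lemma shf_zero (s : ℕ → E) : shf 0 s = s := by funext i; simp [shf]

lemma mem_cyl {s : ℕ → E} {l : List E} : s ∈ cyl l ↔ pre s l.length = l := Iff.rfl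

lemma mem_cyl_pre (s : ℕ → E) (n : ℕ) : s ∈ cyl (pre s n) := by simp [mem_cyl]

lemma mem_cyl_append {s : ℕ → E} {l m : List E} :
    s ∈ cyl (l ++ m) ↔ s ∈ cyl l ∧ shf l.length s ∈ cyl m := by
  simp only [mem_cyl, List.length_append, pre_add]
  constructor
  · intro h
    exact List.append_inj h (by simp)
  · rintro ⟨h1, h2⟩
    rw [h1, h2]

@[simp] lemma cyl_nil : cyl ([] : List E) = univ := by ext; simp [mem_cyl]

lemma mem_cyl_take {s : ℕ → E} {l : List E} (h : s ∈ cyl l) {j : ℕ} (hj : j ≤ l.length) :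
    pre s j = l.take j := by
  rw [← pre_take s hj, h]

lemma pre_eq_of_le {s t : ℕ → E} {n j : ℕ} (h : pre s n = pre t n) (hj : j ≤ n) :
    pre s j = pre t j := by
  rw [← pre_take s hj, ← pre_take t hj, h]

lemma pre_eq_iff {s t : ℕ → E} {n : ℕ} : pre s n = pre t n ↔ ∀ i < n, s i = t i := by
  simp [pre]

lemma cyl_pre_eq (s : ℕ → E) (n : ℕ) : cyl (pre s n) = PiNat.cylinder (E := fun _ => E) s n := by
  ext t
  rw [PiNat.mem_cylinder_iff, mem_cyl, pre_length, pre_eq_iff]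

/-- A family of lists none of which is a proper prefix of another. -/
def PrefixFree (F : Set (List E)) : Prop := ∀ l ∈ F, ∀ m ∈ F, l <+: m → l = m

lemma PrefixFree.mono {F G : Set (List E)} (hG : PrefixFree G) (h : F ⊆ G) : PrefixFree F :=
  fun l hl m hm => hG l (h hl) m (h hm)

lemma PrefixFree.disjoint {F : Set (List E)} (hF : PrefixFree F) {l m : List E}
    (hl : l ∈ F) (hm : m ∈ F) (hne : l ≠ m) : Disjoint (cyl l) (cyl m) := by
  rw [Set.disjoint_left]
  intro s hs hs'
  rcases le_total l.length m.length with h | h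
  · refine hne (hF l hl m hm ?_)
    rw [← show pre s l.length = l from hs, mem_cyl_take hs' h]
    exact List.take_prefix _ _
  · refine hne (hF m hm l hl ?_).symm
    rw [← show pre s m.length = m from hs', mem_cyl_take hs h]
    exact List.take_prefix _ _

/-- The shortest lists with property `p`: no proper prefix has it. -/
def minl (p : List E → Prop) : Set (List E) := {l | p l ∧ ∀ j < l.length, ¬ p (l.take j)}

lemma minl_prefixFree (p : List E → Prop) : PrefixFree (minl p) := by
  rintro l hl m hm hlm
  by_contra hne
  have hlt : l.length < m.length := by
    refine lt_of_le_of_ne hlm.length_le fun h => hne (hlm.eq_of_length h)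
  exact hm.2 _ hlt (by rw [← List.prefix_iff_eq_take.1 hlm]; exact hl.1)

lemma exists_pre_mem_minl {p : List E → Prop} {s : ℕ → E} {n : ℕ} (h : p (pre s n)) :
    ∃ m ≤ n, pre s m ∈ minl p := by
  have hex : ∃ m, p (pre s m) := ⟨n, h⟩
  refine ⟨Nat.find hex, Nat.find_min' hex h, Nat.find_spec hex, fun j hj => ?_⟩
  rw [pre_length] at hj
  rw [pre_take _ hj.le]
  exact Nat.find_min hex hj

end Basics

section Meas

variable {E : Type*} [Fintype E] [TopologicalSpace E] [DiscreteTopology E] [MeasurableSpace E]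
  [BorelSpace E]

lemma isOpen_cyl (l : List E) : IsOpen (cyl l) := by
  rcases (cyl l).eq_empty_or_nonempty with h | ⟨s, hs⟩
  · rw [h]; exact isOpen_empty
  · rw [← show pre s l.length = l from hs, cyl_pre_eq]
    exact PiNat.isOpen_cylinder (E := fun _ => E) s _

lemma measurableSet_cyl (l : List E) : MeasurableSet (cyl l) := (isOpen_cyl l).measurableSet

lemma measurable_shf (n : ℕ) : Measurable (shf n : (ℕ → E) → (ℕ → E)) :=
  measurable_pi_lambda _ fun _ => measurable_pi_apply _

lemma exists_cyl_subset {O : Set (ℕ → E)} (hO : IsOpen O) {s : ℕ → E} (hs : s ∈ O) :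
    ∃ n, cyl (pre s n) ⊆ O := by
  obtain ⟨v, ⟨x, n, rfl⟩, hsv, hv⟩ :=
    (PiNat.isTopologicalBasis_cylinders (fun _ : ℕ => E)).exists_subset_of_mem_open hs hO
  refine ⟨n, ?_⟩
  rw [cyl_pre_eq, PiNat.mem_cylinder_iff_eq.1 hsv]
  exact hv

lemma tsum_cyl_le (Q : Measure (ℕ → E)) {F : Set (List E)} (hF : PrefixFree F)
    {A : Set (ℕ → E)} (hA : ∀ l ∈ F, cyl l ⊆ A) : ∑' l : F, Q (cyl (l : List E)) ≤ Q A := by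
  rw [← measure_iUnion (fun l m hlm => hF.disjoint l.2 m.2 (fun h => hlm (Subtype.ext h)))
    (fun l => measurableSet_cyl _)]
  exact measure_mono (iUnion_subset fun l => hA l l.2)

lemma measure_le_tsum (Q : Measure (ℕ → E)) {F : Set (List E)} {A : Set (ℕ → E)}
    (hA : ∀ s ∈ A, ∃ l ∈ F, s ∈ cyl l) :
    Q A ≤ ∑' l : F, Q (A ∩ cyl (l : List E)) := by
  refine (measure_mono fun s hs => ?_).trans (measure_iUnion_le _)
  obtain ⟨l, hl, hsl⟩ := hA s hs
  exact mem_iUnion.2 ⟨⟨l, hl⟩, hs, hsl⟩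

/-- A Vitali covering estimate: a comparison of two measures along arbitrarily long cylinders
around each point of `B` passes to `B`, since the shortest such cylinders inside an open set are
disjoint. -/
lemma vitali (Q₁ Q₂ : Measure (ℕ → E)) [IsFiniteMeasure Q₂] (c : ℝ≥0∞) (hc : c ≠ ⊤)
    (B : Set (ℕ → E))
    (hB : ∀ s ∈ B, ∃ᶠ n in atTop, Q₁ (cyl (pre s n)) ≤ c * Q₂ (cyl (pre s n))) :
    Q₁ B ≤ c * Q₂ B := by
  have key : ∀ r, Q₂ B < r → Q₁ B ≤ c * r := by
    intro r hr
    obtain ⟨O, hBO, hO, hOr⟩ := B.exists_isOpen_lt_of_lt r hr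
    set p : List E → Prop := fun l => cyl l ⊆ O ∧ Q₁ (cyl l) ≤ c * Q₂ (cyl l) with hp
    have hcov : ∀ s ∈ B, ∃ l ∈ minl p, s ∈ cyl l := by
      intro s hs
      obtain ⟨n, hn⟩ := exists_cyl_subset hO (hBO hs)
      obtain ⟨m, hm, hm'⟩ := (frequently_atTop.1 (hB s hs)) n
      have : p (pre s m) := by
        refine ⟨fun t ht => hn ?_, hm'⟩
        rw [mem_cyl, pre_length] at ht ⊢
        exact pre_eq_of_le ht hm
      obtain ⟨k, -, hk⟩ := exists_pre_mem_minl this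
      exact ⟨_, hk, mem_cyl_pre _ _⟩
    calc Q₁ B ≤ ∑' l : minl p, Q₁ (B ∩ cyl (l : List E)) := measure_le_tsum _ hcov
      _ ≤ ∑' l : minl p, c * Q₂ (cyl (l : List E)) :=
          ENNReal.tsum_le_tsum fun l => (measure_mono inter_subset_right).trans l.2.1.2
      _ = c * ∑' l : minl p, Q₂ (cyl (l : List E)) := ENNReal.tsum_mul_left
      _ ≤ c * Q₂ O := by
          gcongr
          exact tsum_cyl_le Q₂ (minl_prefixFree p) fun l hl => hl.1.1
      _ ≤ c * r := by gcongr
  have h1 : Tendsto (fun r => c * r) (𝓝[>] (Q₂ B)) (𝓝 (c * Q₂ B)) :=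
    ((ENNReal.continuous_const_mul hc).tendsto _).mono_left nhdsWithin_le_nhds
  have : (𝓝[>] (Q₂ B)).NeBot := nhdsGT_neBot_of_exists_gt ⟨⊤, measure_lt_top _ _⟩
  exact ge_of_tendsto h1 (eventually_nhdsWithin_of_forall fun r hr => key r hr)

end Meas

end RWLaw

namespace RWLaw

/-! ### Levels, first passages and the structural hypotheses -/

section Levels

variable {E : Type*} (lev : E → ℝ)

/-- The level reached from `0` after performing the steps in `l`. -/
def lvl (l : List E) : ℝ := (l.map lev).sum

/-- The level at time `n` of the walk with steps `s`. -/
def lv (s : ℕ → E) (n : ℕ) : ℝ := lvl lev (pre s n)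

@[simp] lemma lvl_nil : lvl lev [] = 0 := by simp [lvl]

lemma lvl_append (l m : List E) : lvl lev (l ++ m) = lvl lev l + lvl lev m := by simp [lvl]

lemma lvl_cons (a : E) (m : List E) : lvl lev (a :: m) = lev a + lvl lev m := by simp [lvl]

@[simp] lemma lv_zero (s : ℕ → E) : lv lev s 0 = 0 := by simp [lv]

lemma lv_add (s : ℕ → E) (n m : ℕ) : lv lev s (n + m) = lv lev s n + lv lev (shf n s) m := by
  simp [lv, pre_add, lvl_append]

lemma lv_succ (s : ℕ → E) (n : ℕ) : lv lev s (n + 1) = lv lev s n + lev (s n) := by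
  rw [lv_add]; simp [lv, pre, lvl, shf]

lemma lv_eq_sum (s : ℕ → E) (n : ℕ) : lv lev s n = ∑ i ∈ Finset.range n, lev (s i) := by
  induction n with
  | zero => simp
  | succ n ih => rw [lv_succ, ih, Finset.sum_range_succ]

lemma lv_congr {s t : ℕ → E} {n j : ℕ} (h : pre s n = pre t n) (hj : j ≤ n) :
    lv lev s j = lv lev t j := by
  rw [lv, lv, pre_eq_of_le h hj]

/-- The walk ends at a strict record level. -/
def Rec (l : List E) : Prop := ∀ j < l.length, lvl lev (l.take j) < lvl lev l

/-- The walk never goes below its starting level. -/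
def NN (l : List E) : Prop := ∀ j ≤ l.length, 0 ≤ lvl lev (l.take j)

lemma NN_pre {s : ℕ → E} {n : ℕ} : NN lev (pre s n) ↔ ∀ j ≤ n, 0 ≤ lv lev s j := by
  simp only [NN, pre_length, lv]
  exact forall₂_congr fun j hj => by rw [pre_take s hj]

lemma Rec_pre {s : ℕ → E} {n : ℕ} : Rec lev (pre s n) ↔ ∀ j < n, lv lev s j < lv lev s n := by
  simp only [Rec, pre_length, lv]
  exact forall₂_congr fun j hj => by rw [pre_take s hj.le]

/-- `n` is the first time at which the level is at least `k`. -/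
def FP (k : ℝ) (s : ℕ → E) (n : ℕ) : Prop := k ≤ lv lev s n ∧ ∀ j < n, lv lev s j < k

lemma FP.congr {k : ℝ} {s t : ℕ → E} {n : ℕ} (h : FP lev k s n) (hst : pre s n = pre t n) :
    FP lev k t n := by
  refine ⟨?_, fun j hj => ?_⟩
  · rw [← lv_congr lev hst le_rfl]; exact h.1
  · rw [← lv_congr lev hst hj.le]; exact h.2 j hj

lemma FP.unique {k : ℝ} {s : ℕ → E} {n m : ℕ} (h : FP lev k s n) (h' : FP lev k s m) : n = m := by
  rcases lt_trichotomy n m with hl | hl | hl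
  · exact absurd (h'.2 _ hl) (not_lt.2 h.1)
  · exact hl
  · exact absurd (h.2 _ hl) (not_lt.2 h'.1)

lemma exists_FP {k : ℝ} {s : ℕ → E} {n : ℕ} (h : k ≤ lv lev s n) : ∃ m ≤ n, FP lev k s m := by
  have hex : ∃ m, k ≤ lv lev s m := ⟨n, h⟩
  exact ⟨Nat.find hex, Nat.find_min' hex h, Nat.find_spec hex,
    fun j hj => not_le.1 (Nat.find_min hex hj)⟩

lemma FP.mem_minl {k : ℝ} {s : ℕ → E} {n : ℕ} (h : FP lev k s n) :
    pre s n ∈ minl (fun l => k ≤ lvl lev l) := by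
  refine ⟨h.1, fun j hj => ?_⟩
  rw [pre_length] at hj
  rw [pre_take _ hj.le]
  exact not_le.2 (h.2 j hj)

lemma FP_of_mem_minl {k : ℝ} {s : ℕ → E} {n : ℕ} (h : pre s n ∈ minl (fun l => k ≤ lvl lev l)) :
    FP lev k s n := by
  refine ⟨h.1, fun j hj => ?_⟩
  have := h.2 j (by simpa using hj)
  rw [pre_take _ hj.le] at this
  exact not_le.1 this

/-- The number of steps of `l` taken from a level at least `θ`. -/
noncomputable def upc (θ : ℝ) (l : List E) : ℕ :=
  ∑ j ∈ Finset.range l.length, if θ ≤ lvl lev (l.take j) then 1 else 0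

/-- Continuations `m` of `p` that end at level at least `k` and contain exactly `b` steps taken
from levels at least `k`. -/
def Mid (k : ℝ) (b : ℕ) (p : List E) : Set (List E) :=
  {m | k ≤ lvl lev p + lvl lev m ∧ upc lev (k - lvl lev p) m = b}

/-- The walk stays nonnegative and is unbounded above. -/
def V0 : Set (ℕ → E) := {s | (∀ n, 0 ≤ lv lev s n) ∧ ∀ K : ℕ, ∃ n, (K : ℝ) ≤ lv lev s n}

/-- `n` is a cut time: a strict record time after which the walk never goes below the record
again, and is unbounded above. -/
def Cut (s : ℕ → E) (n : ℕ) : Prop := (∀ j < n, lv lev s j < lv lev s n) ∧ shf n s ∈ V0 lev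

end Levels

section Meas

variable {E : Type*} [Fintype E] [TopologicalSpace E] [DiscreteTopology E] [MeasurableSpace E]
  [BorelSpace E]

/-- The properties of the annealed law `Q` of the sequence of steps which the law of large numbers
in the direction measured by `lev` rests on. -/
structure Hyp (lev : E → ℝ) (Q : Measure (ℕ → E)) : Prop where
  prob : IsProbabilityMeasure Q
  step : ∀ e, |lev e| ≤ 1
  /-- A walk at a strict record sees a fresh environment until it goes below the record. -/
  factor : ∀ l m, Rec lev l → NN lev m → Q (cyl (l ++ m)) = Q (cyl l) * Q (cyl m)
  /-- Bound for walks which, after first reaching level `k`, make exactly `b` steps at levels at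
  least `k` before following one of the nonnegative paths in `G`. The factor `(#E)^b` is the number
  of ways to choose these `b` steps, and the path in `G` costs at most what it costs in a fresh
  environment. -/
  script : ∀ (k : ℝ) (p : List E), p ∈ minl (fun l => k ≤ lvl lev l) → ∀ (b : ℕ)
    (G : Set (List E)), (∀ g ∈ G, NN lev g) →
    ∑' m : Mid lev k b p, ∑' g : G, Q (cyl (p ++ m ++ g)) ≤
      (Fintype.card E : ℝ≥0∞) ^ b * Q (cyl p) * ∑' g : G, Q (cyl (g : List E))

variable {lev : E → ℝ}

lemma measurable_lv (n : ℕ) : Measurable (fun s : ℕ → E => lv lev s n) := by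
  simp only [lv_eq_sum]
  refine Finset.measurable_sum _ fun i _ => ?_
  exact (continuous_of_discreteTopology (f := lev)).measurable.comp (measurable_pi_apply i)

lemma measurableSet_V0 : MeasurableSet (V0 lev) := by
  have : V0 lev = (⋂ n, {s | 0 ≤ lv lev s n}) ∩ ⋂ K : ℕ, ⋃ n, {s | (K : ℝ) ≤ lv lev s n} := by
    ext s; simp [V0]
  rw [this]
  refine (MeasurableSet.iInter fun n => measurableSet_le measurable_const (measurable_lv n)).inter
    (MeasurableSet.iInter fun K => MeasurableSet.iUnion fun n =>
      measurableSet_le measurable_const (measurable_lv n))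

lemma measurableSet_Cut (n : ℕ) : MeasurableSet {s | Cut lev s n} := by
  have : {s | Cut lev s n} =
      (⋂ j, ⋂ (_ : j < n), {s | lv lev s j < lv lev s n}) ∩ shf n ⁻¹' V0 lev := by
    ext s; simp [Cut]
  rw [this]
  refine (MeasurableSet.iInter fun j => MeasurableSet.iInter fun _ =>
    measurableSet_lt (measurable_lv j) (measurable_lv n)).inter
      (measurable_shf n measurableSet_V0)

variable {Q : Measure (ℕ → E)}

lemma Hyp.lv_le (h : Hyp lev Q) (s : ℕ → E) (n : ℕ) : lv lev s n ≤ n := by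
  induction n with
  | zero => simp
  | succ n ih =>
    rw [lv_succ]; push_cast
    have := (abs_le.1 (h.step (s n))).2
    linarith

/-- The level of a first passage is overshot by less than one. -/
lemma Hyp.FP_lt (h : Hyp lev Q) {k : ℝ} (hk : 0 ≤ k) {s : ℕ → E} {n : ℕ} (hn : FP lev k s n) :
    lv lev s n < k + 1 := by
  rcases n with _ | n
  · simp; linarith
  · rw [lv_succ]
    have := (abs_le.1 (h.step (s n))).2
    have := hn.2 n (Nat.lt_succ_self n)
    linarith

/-- The fresh-start property at strict records for general events of nonnegative paths. -/
lemma Hyp.factor_meas (h : Hyp lev Q) {p : List E} (hp : Rec lev p) {B : Set (ℕ → E)}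
    (hB : MeasurableSet B) (hnn : ∀ s ∈ B, ∀ n, 0 ≤ lv lev s n) :
    Q (cyl p ∩ shf p.length ⁻¹' B) = Q (cyl p) * Q B := by
  have := h.prob
  set Q₁ : Measure (ℕ → E) := (Q.restrict (cyl p)).map (shf p.length) with hQ₁
  have hap : ∀ A, MeasurableSet A → Q₁ A = Q (cyl p ∩ shf p.length ⁻¹' A) := by
    intro A hA
    rw [hQ₁, Measure.map_apply (measurable_shf _) hA,
      Measure.restrict_apply (measurable_shf _ hA), inter_comm]
  have hcyl : ∀ s ∈ B, ∀ n, Q₁ (cyl (pre s n)) = Q (cyl p) * Q (cyl (pre s n)) := by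
    intro s hs n
    rw [hap _ (measurableSet_cyl _), ← h.factor _ _ hp ((NN_pre lev).2 fun j _ => hnn s hs j)]
    congr 1
    ext t
    exact mem_cyl_append.symm
  rw [← hap B hB]
  refine le_antisymm ?_ ?_
  · refine vitali Q₁ Q _ (measure_ne_top _ _) B fun s hs => Frequently.of_forall fun n => ?_
    rw [hcyl s hs n]
  · have h2 := vitali (Q (cyl p) • Q) Q₁ 1 (by simp) B fun s hs => Frequently.of_forall fun n => by
      rw [hcyl s hs n]; simp
    simpa using h2

lemma Hyp.factor_V0 (h : Hyp lev Q) {p : List E} (hp : Rec lev p) {B : Set (ℕ → E)}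
    (hB : MeasurableSet B) (hV : B ⊆ V0 lev) :
    Q (cyl p ∩ shf p.length ⁻¹' B) = Q (cyl p) * Q B :=
  h.factor_meas hp hB fun _ hs n => (hV hs).1 n

/-- If `V0` has positive probability, then every fresh record succeeds with that probability in
being a cut level, so a walk with infinitely many records has cut times at arbitrarily high
levels. -/
lemma Hyp.exists_cut (h : Hyp lev Q) (hq : Q (V0 lev) ≠ 0) :
    ∀ᵐ s ∂Q, (∀ K : ℕ, ∃ n, (K : ℝ) ≤ lv lev s n) → ∀ K : ℕ, ∃ n, (K : ℝ) ≤ lv lev s n ∧ Cut lev s n := by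
  have := h.prob
  have key : ∀ K : ℕ, Q {s | (∀ K : ℕ, ∃ n, (K : ℝ) ≤ lv lev s n) ∧
      ∀ n, (K : ℝ) ≤ lv lev s n → ¬ Cut lev s n} = 0 := by
    intro K
    set N := {s | (∀ K : ℕ, ∃ n, (K : ℝ) ≤ lv lev s n) ∧
      ∀ n, (K : ℝ) ≤ lv lev s n → ¬ Cut lev s n} with hN
    have hle : Q N ≤ (1 - Q (V0 lev)) * Q N := by
      have := vitali (Q.restrict N) Q (1 - Q (V0 lev)) (by simp) N ?_
      · rwa [Measure.restrict_apply_self] at this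
      · intro s hs
        rw [frequently_atTop]
        intro a
        obtain ⟨n, hn⟩ := hs.1 (max a K)
        obtain ⟨m, -, hm⟩ := exists_FP lev hn
        have hmx : ((max a K : ℕ) : ℝ) ≤ m := hm.1.trans (h.lv_le s m)
        have hmx' : max a K ≤ m := by exact_mod_cast hmx
        refine ⟨m, (le_max_left _ _).trans hmx', ?_⟩
        have hrec : Rec lev (pre s m) := (Rec_pre lev).2 fun j hj => (hm.2 j hj).trans_le hm.1
        rw [Measure.restrict_apply (measurableSet_cyl _)]
        have hsub : cyl (pre s m) ∩ N ⊆
            cyl (pre s m) \ (cyl (pre s m) ∩ shf (pre s m).length ⁻¹' V0 lev) := by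
          rintro t ⟨ht, htN⟩
          refine ⟨ht, fun ht' => htN.2 m ?_ ⟨?_, by simpa using ht'.2⟩⟩
          · have hst : pre t m = pre s m := by simpa [mem_cyl] using ht
            rw [lv_congr lev hst le_rfl]
            refine le_trans ?_ hm.1
            exact_mod_cast le_max_right _ _
          · have hst : pre t m = pre s m := by simpa [mem_cyl] using ht
            rw [← Rec_pre lev, hst]; exact hrec
        refine (measure_mono hsub).trans ?_
        rw [measure_sdiff inter_subset_left
          ((measurableSet_cyl _).inter (measurable_shf _ measurableSet_V0)).nullMeasurableSet
          (measure_ne_top _ _), h.factor_V0 hrec measurableSet_V0 subset_rfl,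
          ENNReal.sub_mul (fun _ _ => measure_ne_top _ _), one_mul, mul_comm]
    by_contra h0
    have hlt : (1 - Q (V0 lev)) * Q N < 1 * Q N := by
      refine ENNReal.mul_lt_mul_left h0 (measure_ne_top _ _) ?_
      exact ENNReal.sub_lt_self (by simp) (by simp) hq
    rw [one_mul] at hlt
    exact absurd hle (not_le.2 hlt)
  have hall : ∀ᵐ s ∂Q, ∀ K : ℕ, ¬ ((∀ K : ℕ, ∃ n, (K : ℝ) ≤ lv lev s n) ∧
      ∀ n, (K : ℝ) ≤ lv lev s n → ¬ Cut lev s n) := by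
    rw [ae_all_iff]
    intro K
    rw [ae_iff]
    simpa using key K
  filter_upwards [hall] with s hs hsup K
  by_contra hc
  push Not at hc
  exact hs K ⟨hsup, hc⟩

end Meas

end RWLaw

namespace RWLaw

/-! ### Regeneration at cut times -/

section Regen

variable {E : Type*} (lev : E → ℝ)

/-- Walks in `V0` that have cut times at arbitrarily high levels. -/
def Om : Set (ℕ → E) := {s | s ∈ V0 lev ∧ ∀ K : ℕ, ∃ n, (K : ℝ) ≤ lv lev s n ∧ Cut lev s n}

/-- The first positive cut time (`0` if there is none). -/
noncomputable def R (s : ℕ → E) : ℕ := sInf {n | 0 < n ∧ Cut lev s n}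

/-- The walk seen from its first positive cut time. -/
noncomputable def th (s : ℕ → E) : ℕ → E := shf (R lev s) s

variable {lev}

lemma Cut.le {s : ℕ → E} {n m : ℕ} (h : Cut lev s n) (hm : n ≤ m) : lv lev s n ≤ lv lev s m := by
  obtain ⟨j, rfl⟩ := Nat.exists_eq_add_of_le hm
  rw [lv_add]
  have := h.2.1 j
  linarith

lemma Cut.shift {s : ℕ → E} {n : ℕ} (h : Cut lev s n) (m : ℕ) :
    Cut lev (shf n s) m ↔ Cut lev s (n + m) := by
  unfold Cut
  rw [shf_shf]
  refine and_congr ?_ Iff.rfl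
  constructor
  · intro hm j hj
    rcases lt_or_ge j n with hjn | hjn
    · exact (h.1 j hjn).trans_le (h.le (Nat.le_add_right _ _))
    · obtain ⟨i, rfl⟩ := Nat.exists_eq_add_of_le hjn
      rw [lv_add, lv_add]
      have := hm i (by omega)
      linarith
  · intro hm j hj
    have := hm (n + j) (by omega)
    rw [lv_add, lv_add] at this
    linarith

lemma exists_pos_cut {s : ℕ → E} (hs : s ∈ Om lev) : ∃ n, 0 < n ∧ Cut lev s n := by
  obtain ⟨n, hn, hc⟩ := hs.2 1
  refine ⟨n, Nat.pos_of_ne_zero ?_, hc⟩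
  rintro rfl
  simp at hn
  linarith

lemma R_spec {s : ℕ → E} (hs : s ∈ Om lev) : 0 < R lev s ∧ Cut lev s (R lev s) :=
  Nat.sInf_mem (s := {n | 0 < n ∧ Cut lev s n}) (exists_pos_cut hs)

lemma R_le {s : ℕ → E} {n : ℕ} (hn : 0 < n) (hc : Cut lev s n) : R lev s ≤ n :=
  Nat.sInf_le (s := {n | 0 < n ∧ Cut lev s n}) ⟨hn, hc⟩

lemma shf_mem_Om {s : ℕ → E} (hs : ∀ K : ℕ, ∃ n, (K : ℝ) ≤ lv lev s n ∧ Cut lev s n) {n : ℕ}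
    (h : Cut lev s n) : shf n s ∈ Om lev := by
  refine ⟨h.2, fun K => ?_⟩
  obtain ⟨N, hN⟩ := exists_nat_ge (lv lev s n)
  obtain ⟨a, hKa, hca⟩ := hs (K + N + 1)
  have hna : n < a := by
    by_contra hc
    rcases (not_lt.1 hc).lt_or_eq with hlt | rfl
    · have := h.1 a hlt
      push_cast at hKa
      have : (0 : ℝ) ≤ K := by positivity
      linarith
    · push_cast at hKa
      have : (0 : ℝ) ≤ K := by positivity
      linarith
  obtain ⟨m, rfl⟩ := Nat.exists_eq_add_of_le hna.le
  refine ⟨m, ?_, (h.shift m).2 hca⟩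
  rw [lv_add] at hKa
  push_cast at hKa
  linarith

lemma Om.shf {s : ℕ → E} (hs : s ∈ Om lev) {n : ℕ} (h : Cut lev s n) : shf n s ∈ Om lev :=
  shf_mem_Om hs.2 h

lemma th_mem {s : ℕ → E} (hs : s ∈ Om lev) : th lev s ∈ Om lev := Om.shf hs (R_spec hs).2

/-- A nonnegative strict record followed by a walk in `Om` is a walk in `Om`. -/
lemma mem_Om_of_shf {s : ℕ → E} {n : ℕ} (hnn : NN lev (pre s n)) (hrec : Rec lev (pre s n))
    (hs : shf n s ∈ Om lev) : s ∈ Om lev ∧ Cut lev s n := by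
  have hcut : Cut lev s n := ⟨(Rec_pre lev).1 hrec, hs.1⟩
  have hnn' := (NN_pre lev).1 hnn
  have hcuts : ∀ K : ℕ, ∃ n, (K : ℝ) ≤ lv lev s n ∧ Cut lev s n := by
    intro K
    obtain ⟨m, hm, hc⟩ := hs.2 K
    refine ⟨n + m, ?_, (hcut.shift m).1 hc⟩
    rw [lv_add]
    have := hnn' n le_rfl
    linarith
  refine ⟨⟨⟨fun j => ?_, fun K => ?_⟩, hcuts⟩, hcut⟩
  · rcases le_total j n with hj | hj
    · exact hnn' j hj
    · exact (hnn' n le_rfl).trans (hcut.le hj)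
  · obtain ⟨n, hn, -⟩ := hcuts K
    exact ⟨n, hn⟩

/-- The first segment of a walk in `Om` is recognised from the segment alone, as soon as its
continuation lies in `Om`: no earlier time can turn into a cut time, nor stop being one. -/
lemma R_eq_of_pre {s t : ℕ → E} (hs : s ∈ Om lev) (hst : pre t (R lev s) = pre s (R lev s))
    (ht : shf (R lev s) t ∈ Om lev) : t ∈ Om lev ∧ R lev t = R lev s := by
  obtain ⟨hpos, hcut⟩ := R_spec hs
  set n := R lev s with hn
  have hrec : Rec lev (pre t n) := by rw [hst]; exact (Rec_pre lev).2 hcut.1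
  have hnn : NN lev (pre t n) := by rw [hst]; exact (NN_pre lev).2 fun j _ => hs.1.1 j
  obtain ⟨htO, htc⟩ := mem_Om_of_shf hnn hrec ht
  refine ⟨htO, le_antisymm (R_le hpos htc) ?_⟩
  by_contra hlt
  push Not at hlt
  obtain ⟨hpos', hcut'⟩ := R_spec htO
  set j := R lev t with hj
  have hc : Cut lev s j := by
    refine ⟨fun i hi => ?_, fun i => ?_, fun K => ?_⟩
    · rw [← lv_congr lev hst (hi.le.trans hlt.le), ← lv_congr lev hst hlt.le]
      exact hcut'.1 i hi
    · have h1 : lv lev s j ≤ lv lev s (j + i) := by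
        rcases le_total (j + i) n with hji | hji
        · rw [← lv_congr lev hst hji, ← lv_congr lev hst hlt.le]
          exact hcut'.le (Nat.le_add_right _ _)
        · refine le_trans ?_ (hcut.le hji)
          rw [← lv_congr lev hst le_rfl, ← lv_congr lev hst hlt.le]
          exact hcut'.le hlt.le
      rw [lv_add] at h1
      linarith
    · obtain ⟨N, hN⟩ := exists_nat_ge (lv lev s j)
      obtain ⟨a, ha, hca⟩ := hs.2 (K + N + n + 1)
      push_cast at ha
      have hja : j ≤ a := by
        by_contra hc
        have h1 := hcut'.1 a (by omega)
        rw [lv_congr lev hst (by omega), lv_congr lev hst hlt.le] at h1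
        have : (0 : ℝ) ≤ K := by positivity
        have : (0 : ℝ) ≤ n := by positivity
        linarith
      obtain ⟨m, rfl⟩ := Nat.exists_eq_add_of_le hja
      refine ⟨m, ?_⟩
      rw [lv_add] at ha
      have : (0 : ℝ) ≤ n := by positivity
      linarith
  have := R_le hpos' hc
  omega

end Regen

section RegenMeas

variable {E : Type*} [Fintype E] [TopologicalSpace E] [DiscreteTopology E] [MeasurableSpace E]
  [BorelSpace E] {lev : E → ℝ} {Q : Measure (ℕ → E)}

lemma measurableSet_Om : MeasurableSet (Om lev) := by
  have : Om lev = V0 lev ∩ ⋂ K : ℕ, ⋃ n, ({s | (K : ℝ) ≤ lv lev s n} ∩ {s | Cut lev s n}) := by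
    ext s; simp [Om]
  rw [this]
  exact measurableSet_V0.inter (MeasurableSet.iInter fun K => MeasurableSet.iUnion fun n =>
    (measurableSet_le measurable_const (measurable_lv n)).inter (measurableSet_Cut n))

lemma measurable_R : Measurable (R lev) := by
  have hp : ∀ n, MeasurableSet {s | 0 < n ∧ Cut lev s n} := fun n =>
    (MeasurableSet.const (0 < n)).inter (measurableSet_Cut n)
  refine measurable_to_countable' fun n => ?_
  have : R lev ⁻¹' {n} =
      ({s | 0 < n ∧ Cut lev s n} ∩ ⋂ j, ⋂ (_ : j < n), {s | 0 < j ∧ Cut lev s j}ᶜ) ∪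
      ({_s | n = 0} ∩ ⋂ j, {s | 0 < j ∧ Cut lev s j}ᶜ) := by
    ext s
    simp only [mem_preimage, mem_singleton_iff, mem_union, mem_inter_iff, mem_iInter,
      mem_compl_iff]
    constructor
    · rintro rfl
      by_cases hne : {n | 0 < n ∧ Cut lev s n}.Nonempty
      · left
        exact ⟨Nat.sInf_mem hne, fun j hj => Nat.notMem_of_lt_sInf hj⟩
      · right
        have he := Set.not_nonempty_iff_eq_empty.1 hne
        refine ⟨?_, fun j hj => hne ⟨j, hj⟩⟩
        change sInf _ = 0
        rw [he]; exact Nat.sInf_empty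
    · rintro (⟨h1, h2⟩ | ⟨h1, h2⟩)
      · refine le_antisymm (Nat.sInf_le h1) ?_
        by_contra hc
        push Not at hc
        exact h2 _ hc (Nat.sInf_mem (s := {n | 0 < n ∧ Cut lev s n}) ⟨n, h1⟩)
      · have he : {n | 0 < n ∧ Cut lev s n} = ∅ := Set.eq_empty_of_forall_notMem h2
        change sInf _ = n
        rw [he, Nat.sInf_empty]; exact h1.symm
  rw [this]
  refine ((hp n).inter (MeasurableSet.iInter fun j => MeasurableSet.iInter fun _ =>
    (hp j).compl)).union ((MeasurableSet.const _).inter (MeasurableSet.iInter fun j => (hp j).compl))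

lemma measurable_th : Measurable (th lev) := by
  have h1 : Measurable (fun x : (ℕ → E) × ℕ => shf x.2 x.1) :=
    measurable_from_prod_countable_left fun n => measurable_shf n
  exact h1.comp (measurable_id.prodMk measurable_R)

/-- Functions of the first segment are measurable, since there are countably many segments. -/
lemma measurable_list_fun {β : Type*} [MeasurableSpace β] (f : List E → β) :
    Measurable (fun s : ℕ → E => f (pre s (R lev s))) := by
  have h1 : Measurable (fun x : (ℕ → E) × ℕ => f (pre x.1 x.2)) := by
    refine measurable_from_prod_countable_left fun n => ?_
    intro S hS
    have : (fun s : ℕ → E => f (pre s n)) ⁻¹' S =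
        ⋃ l : {l : List E // f l ∈ S ∧ l.length = n}, cyl (l : List E) := by
      ext s
      simp only [mem_preimage, mem_iUnion]
      constructor
      · intro h
        exact ⟨⟨_, h, pre_length _ _⟩, mem_cyl_pre _ _⟩
      · rintro ⟨⟨l, hl, rfl⟩, h⟩
        rw [mem_cyl] at h
        rw [h]; exact hl
    rw [this]
    exact MeasurableSet.iUnion fun l => measurableSet_cyl _
  exact h1.comp (measurable_id.prodMk measurable_R)

lemma Hyp.Om_eq (h : Hyp lev Q) (hq : Q (V0 lev) ≠ 0) : Q (Om lev) = Q (V0 lev) := by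
  refine measure_congr ?_
  filter_upwards [h.exists_cut hq] with s hs
  refine propext ⟨fun h => h.1, fun h => ⟨h, hs h.2⟩⟩

/-- Under `Q` restricted to `Om`, the first segment is independent of the walk after it, and the
latter has the law of the original walk; stated without normalisation. -/
lemma Hyp.regen (h : Hyp lev Q) {β : Type*} (f : List E → β) (S : Set β) {B : Set (ℕ → E)}
    (hB : MeasurableSet B) :
    Q (Om lev ∩ {s | f (pre s (R lev s)) ∈ S} ∩ th lev ⁻¹' B) * Q (Om lev) =
      Q (Om lev ∩ {s | f (pre s (R lev s)) ∈ S}) * Q (Om lev ∩ B) := by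
  have hseg : ∀ (l : List E) (B : Set (ℕ → E)), MeasurableSet B →
      (∃ s ∈ Om lev, pre s (R lev s) = l) →
      Q (Om lev ∩ {s | pre s (R lev s) = l} ∩ th lev ⁻¹' B) = Q (cyl l) * Q (Om lev ∩ B) := by
    rintro l B hB ⟨s, hs, rfl⟩
    have hrec : Rec lev (pre s (R lev s)) := (Rec_pre lev).2 (R_spec hs).2.1
    rw [← h.factor_V0 hrec (measurableSet_Om.inter hB) (fun t ht => ht.1.1)]
    congr 1
    ext t
    simp only [mem_inter_iff, mem_preimage, mem_ofPred_eq, mem_cyl, pre_length]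
    constructor
    · rintro ⟨⟨htO, htp⟩, htB⟩
      have hR : R lev t = R lev s := by simpa using congrArg List.length htp
      rw [hR] at htp
      rw [th, hR] at htB
      exact ⟨htp, by have := th_mem htO; rwa [th, hR] at this, htB⟩
    · rintro ⟨htp, htO, htB⟩
      obtain ⟨h1, h2⟩ := R_eq_of_pre hs htp htO
      exact ⟨⟨h1, by rw [h2, htp]⟩, by rw [th, h2]; exact htB⟩
  have hsum : ∀ B : Set (ℕ → E), MeasurableSet B →
      Q (Om lev ∩ {s | f (pre s (R lev s)) ∈ S} ∩ th lev ⁻¹' B) =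
      ∑' l : {l : List E // f l ∈ S},
        Q (Om lev ∩ {s | pre s (R lev s) = l} ∩ th lev ⁻¹' B) := by
    intro B hB
    rw [← measure_iUnion]
    · congr 1
      ext t
      simp only [mem_inter_iff, mem_preimage, mem_ofPred_eq, mem_iUnion]
      constructor
      · rintro ⟨⟨a, b⟩, c⟩
        exact ⟨⟨_, b⟩, ⟨a, rfl⟩, c⟩
      · rintro ⟨⟨l, hl⟩, ⟨a, rfl⟩, c⟩
        exact ⟨⟨a, hl⟩, c⟩
    · intro l m hlm
      rw [Function.onFun, Set.disjoint_left]
      rintro t ⟨⟨-, h1⟩, -⟩ ⟨⟨-, h2⟩, -⟩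
      exact hlm (Subtype.ext (h1.symm.trans h2))
    · intro l
      refine (measurableSet_Om.inter ?_).inter (measurable_th hB)
      exact measurable_list_fun (lev := lev) (β := Prop) (fun m => m = l) (measurableSet_singleton True) |>.congr
        (by ext; simp)
  have h2 := hsum univ MeasurableSet.univ
  rw [preimage_univ, inter_univ] at h2
  rw [hsum B hB, h2, ← ENNReal.tsum_mul_right, ← ENNReal.tsum_mul_right]
  refine tsum_congr fun l => ?_
  by_cases hl : ∃ s ∈ Om lev, pre s (R lev s) = l
  · have h3 := hseg l univ MeasurableSet.univ hl
    rw [preimage_univ, inter_univ] at h3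
    rw [hseg l B hB hl, inter_univ, h3, inter_univ]
    ring
  · have he : Om lev ∩ {s | pre s (R lev s) = l} = ∅ := by
      ext s
      simp only [mem_inter_iff, mem_ofPred_eq, mem_empty_iff_false, iff_false]
      exact fun hs => hl ⟨s, hs.1, hs.2⟩
    simp [he]

end RegenMeas

end RWLaw

namespace RWLaw

open ProbabilityTheory

/-! ### The law of large numbers along cut times -/

section CutLLN

variable {E : Type*} [Fintype E] [TopologicalSpace E] [DiscreteTopology E] [MeasurableSpace E]
  [BorelSpace E] {lev : E → ℝ} {Q : Measure (ℕ → E)}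

lemma Hyp.Om_ne (h : Hyp lev Q) (hq : Q (V0 lev) ≠ 0) : Q (Om lev) ≠ 0 := by
  rwa [h.Om_eq hq]

lemma Hyp.isProb_cond (h : Hyp lev Q) (hq : Q (V0 lev) ≠ 0) :
    IsProbabilityMeasure (Q[|Om lev]) := by
  have := h.prob
  exact cond_isProbabilityMeasure (h.Om_ne hq)

lemma ae_Om : ∀ᵐ s ∂(Q[|Om lev]), s ∈ Om lev :=
  ae_cond_mem measurableSet_Om

lemma measurable_seg {β : Type*} [MeasurableSpace β] (φ : List E → β) (i : ℕ) :
    Measurable (fun s : ℕ → E => φ (pre ((th lev)^[i] s) (R lev ((th lev)^[i] s)))) :=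
  (measurable_list_fun (lev := lev) φ).comp (measurable_th.iterate i)

lemma Hyp.cond_inter (h : Hyp lev Q) (hq : Q (V0 lev) ≠ 0) {β : Type*} (f : List E → β) (S : Set β)
    {B : Set (ℕ → E)} (hB : MeasurableSet B) :
    (Q[|Om lev]) ({s | f (pre s (R lev s)) ∈ S} ∩ th lev ⁻¹' B) =
      (Q[|Om lev]) {s | f (pre s (R lev s)) ∈ S} * (Q[|Om lev]) B := by
  have := h.prob
  have h0 := h.Om_ne hq
  have ht : Q (Om lev) ≠ ⊤ := measure_ne_top _ _
  rw [cond_apply measurableSet_Om, cond_apply measurableSet_Om, cond_apply measurableSet_Om,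
    ← inter_assoc, mul_mul_mul_comm, ← h.regen f S hB, mul_comm _ (Q (Om lev)), mul_assoc,
    ← mul_assoc _ (Q (Om lev)), ENNReal.inv_mul_cancel h0 ht, one_mul]

lemma Hyp.mp_th (h : Hyp lev Q) (hq : Q (V0 lev) ≠ 0) :
    MeasurePreserving (th lev) (Q[|Om lev]) (Q[|Om lev]) := by
  refine ⟨measurable_th, Measure.ext fun B hB => ?_⟩
  rw [Measure.map_apply measurable_th hB]
  have := h.isProb_cond hq
  simpa using h.cond_inter hq (fun _ => ()) univ hB

/-- The strong law for functions of the successive segments between cut times. -/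
lemma Hyp.slln (h : Hyp lev Q) (hq : Q (V0 lev) ≠ 0) (φ : List E → ℝ)
    (hintg : Integrable (fun s => φ (pre s (R lev s))) (Q[|Om lev])) :
    ∀ᵐ s ∂(Q[|Om lev]), Tendsto (fun n : ℕ =>
      (∑ i ∈ Finset.range n, φ (pre ((th lev)^[i] s) (R lev ((th lev)^[i] s)))) / n) atTop
      (𝓝 (∫ s, φ (pre s (R lev s)) ∂(Q[|Om lev]))) := by
  have := h.isProb_cond hq
  have hmp := h.mp_th hq
  set X : ℕ → (ℕ → E) → ℝ := fun i s => φ (pre ((th lev)^[i] s) (R lev ((th lev)^[i] s))) with hX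
  have hmeas : ∀ i, Measurable (X i) := measurable_seg φ
  have hind : ∀ i j, i < j → IndepFun (X i) (X j) (Q[|Om lev]) := by
    intro i j hij
    obtain ⟨m, rfl⟩ := Nat.exists_eq_add_of_lt hij
    rw [indepFun_iff_measure_inter_preimage_eq_mul]
    intro S T hS hT
    have e1 : X i ⁻¹' S = (th lev)^[i] ⁻¹' (X 0 ⁻¹' S) := by ext s; simp [hX]
    have e2 : X (i + m + 1) ⁻¹' T = (th lev)^[i] ⁻¹' (th lev ⁻¹' (X m ⁻¹' T)) := by
      ext s
      simp only [hX, mem_preimage]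
      rw [show i + m + 1 = m + (1 + i) by ring, Function.iterate_add_apply,
        Function.iterate_add_apply]
      simp
    have hm0 := (hmeas 0) hS
    have hm1 := measurable_th (lev := lev) ((hmeas m) hT)
    rw [e1, e2, ← preimage_inter, (hmp.iterate i).measure_preimage (hm0.inter hm1).nullMeasurableSet,
      (hmp.iterate i).measure_preimage hm0.nullMeasurableSet,
      (hmp.iterate i).measure_preimage hm1.nullMeasurableSet,
      hmp.measure_preimage ((hmeas m) hT).nullMeasurableSet]
    exact h.cond_inter hq φ S ((hmeas m) hT)
  have hid : ∀ i, IdentDistrib (X i) (X 0) (Q[|Om lev]) (Q[|Om lev]) := by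
    intro i
    refine ⟨(hmeas i).aemeasurable, (hmeas 0).aemeasurable, ?_⟩
    have : X i = X 0 ∘ (th lev)^[i] := by ext s; simp [hX]
    rw [this, ← Measure.map_map (hmeas 0) (hmp.iterate i).measurable, (hmp.iterate i).map_eq]
  refine strong_law_ae_real X hintg (fun i j hij => ?_) hid
  rcases lt_or_gt_of_ne hij with hlt | hlt
  · exact hind i j hlt
  · exact (hind j i hlt).symm

/-- If the segments between cut times have infinite mean length, their average length tends to
infinity. -/
lemma Hyp.slln_top (h : Hyp lev Q) (hq : Q (V0 lev) ≠ 0)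
    (hintg : ¬ Integrable (fun s => (R lev s : ℝ)) (Q[|Om lev])) :
    ∀ᵐ s ∂(Q[|Om lev]), Tendsto (fun n : ℕ =>
      (∑ i ∈ Finset.range n, (R lev ((th lev)^[i] s) : ℝ)) / n) atTop atTop := by
  have := h.isProb_cond hq
  have hmR : Measurable (fun s : ℕ → E => (R lev s : ℝ)) :=
    (measurable_of_countable (fun n : ℕ => (n : ℝ))).comp measurable_R
  have hmA : ∀ A : ℕ, Measurable (fun s : ℕ → E => min (R lev s : ℝ) A) := fun A =>
    hmR.min measurable_const
  have hiA : ∀ A : ℕ, Integrable (fun s : ℕ → E => min (R lev s : ℝ) A) (Q[|Om lev]) := by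
    intro A
    refine Integrable.of_bound (hmA A).aestronglyMeasurable (A : ℝ) (ae_of_all _ fun s => ?_)
    rw [Real.norm_eq_abs, abs_of_nonneg (by positivity)]
    exact min_le_right _ _
  have hs := fun A : ℕ => h.slln hq (fun l => min (l.length : ℝ) A) (by simpa using hiA A)
  simp only [pre_length] at hs
  have hlim : Tendsto (fun A : ℕ => ∫ s, min (R lev s : ℝ) A ∂(Q[|Om lev])) atTop atTop := by
    have hmono : Monotone (fun A : ℕ => ∫ s, min (R lev s : ℝ) A ∂(Q[|Om lev])) := by
      intro A B hAB
      refine integral_mono (hiA A) (hiA B) fun s => ?_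
      have : (A : ℝ) ≤ B := by exact_mod_cast hAB
      exact min_le_min le_rfl this
    refine tendsto_atTop_atTop_of_monotone hmono ?_
    by_contra hc
    push Not at hc
    obtain ⟨C, hC⟩ := hc
    refine hintg ⟨hmR.aestronglyMeasurable, ?_⟩
    have hle : ∫⁻ s, ENNReal.ofReal (R lev s : ℝ) ∂(Q[|Om lev]) ≤ ENNReal.ofReal C := by
      have ht : Tendsto (fun A : ℕ => ∫⁻ s, ENNReal.ofReal (min (R lev s : ℝ) A) ∂(Q[|Om lev])) atTop
          (𝓝 (∫⁻ s, ENNReal.ofReal (R lev s : ℝ) ∂(Q[|Om lev]))) := by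
        refine lintegral_tendsto_of_tendsto_of_monotone
          (fun A => (hmA A).ennreal_ofReal.aemeasurable) (ae_of_all _ fun s A B hAB => ?_)
          (ae_of_all _ fun s => ?_)
        · refine ENNReal.ofReal_le_ofReal (min_le_min le_rfl ?_)
          exact_mod_cast hAB
        · refine tendsto_const_nhds.congr' ?_
          filter_upwards [eventually_ge_atTop (R lev s)] with A hA
          rw [min_eq_left (by exact_mod_cast hA)]
      refine le_of_tendsto' ht fun A => ?_
      rw [← ofReal_integral_eq_lintegral_ofReal (hiA A) (ae_of_all _ fun s => by positivity)]
      exact ENNReal.ofReal_le_ofReal (hC A).le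
    rw [hasFiniteIntegral_iff_ofReal (ae_of_all _ fun s => by positivity)]
    exact hle.trans_lt ENNReal.ofReal_lt_top
  filter_upwards [ae_all_iff.2 hs] with s hs
  rw [tendsto_atTop]
  intro b
  obtain ⟨A, hA⟩ := (hlim.eventually_gt_atTop b).exists
  filter_upwards [(hs A).eventually (eventually_gt_nhds hA)] with n hn
  refine hn.le.trans ?_
  gcongr
  exact min_le_left _ _

/-- The walks in `Om` whose first segment gains height at least `i`. -/
def Gain (lev : E → ℝ) (i : ℕ) : Set (ℕ → E) := Om lev ∩ {s | (i : ℝ) ≤ lv lev s (R lev s)}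

lemma measurableSet_Gain (i : ℕ) : MeasurableSet (Gain lev i) := by
  refine measurableSet_Om.inter (measurableSet_le measurable_const ?_)
  exact measurable_list_fun (lev := lev) (lvl lev)

/-- The walk reaches level `j` without going negative, and continues from there by a walk in
`Gain lev i`. -/
def Dev (lev : E → ℝ) (j i : ℕ) : Set (ℕ → E) :=
  ⋃ p : {p : List E // p ∈ minl (fun l => (j : ℝ) ≤ lvl lev l) ∧ NN lev p},
    cyl (p : List E) ∩ shf (p : List E).length ⁻¹' Gain lev i

lemma measurableSet_Dev (j i : ℕ) : MeasurableSet (Dev lev j i) :=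
  MeasurableSet.iUnion fun _ => (measurableSet_cyl _).inter (measurable_shf _ (measurableSet_Gain i))

lemma Rec_of_minl {k : ℝ} {p : List E} (hp : p ∈ minl (fun l => k ≤ lvl lev l)) : Rec lev p :=
  fun j hj => (not_le.1 (hp.2 j hj)).trans_le hp.1

/-- The walk reaches level `j` without going negative with probability at least `Q (Om lev)`, and
then sees a fresh environment. -/
lemma Hyp.le_Dev (h : Hyp lev Q) (j i : ℕ) :
    Q (Om lev) * Q (Gain lev i) ≤ Q (Dev lev j i) := by
  have := h.prob
  set F := {p : List E | p ∈ minl (fun l => (j : ℝ) ≤ lvl lev l) ∧ NN lev p} with hF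
  have hFp : PrefixFree F := (minl_prefixFree _).mono fun p hp => hp.1
  have h1 : Q (Dev lev j i) = ∑' p : F, Q (cyl (p : List E)) * Q (Gain lev i) := by
    rw [Dev, measure_iUnion]
    · refine tsum_congr fun p => ?_
      exact h.factor_V0 (Rec_of_minl p.2.1) (measurableSet_Gain i) fun s hs => hs.1.1
    · intro p q hpq
      exact (hFp.disjoint p.2 q.2 fun h => hpq (Subtype.ext h)).mono inter_subset_left
        inter_subset_left
    · exact fun _ => (measurableSet_cyl _).inter (measurable_shf _ (measurableSet_Gain i))
  rw [h1, ENNReal.tsum_mul_right]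
  gcongr
  refine (measure_le_tsum Q (F := F) fun s hs => ?_).trans
    (ENNReal.tsum_le_tsum fun p => measure_mono inter_subset_right)
  obtain ⟨n, hn⟩ := hs.1.2 j
  obtain ⟨m, -, hm⟩ := exists_FP lev hn
  exact ⟨pre s m, ⟨hm.mem_minl, (NN_pre lev).2 fun i _ => hs.1.1 i⟩, mem_cyl_pre _ _⟩

lemma mem_Dev {s : ℕ → E} {j i : ℕ} (hs : s ∈ Dev lev j i) :
    ∃ n, FP lev j s n ∧ Cut lev s n ∧ shf n s ∈ Gain lev i := by
  obtain ⟨⟨p, hp, hnn⟩, hsp, hsg⟩ := mem_iUnion.1 hs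
  have hpre : pre s p.length = p := hsp
  have hFP : FP lev j s p.length := FP_of_mem_minl lev (by rw [hpre]; exact hp)
  exact ⟨p.length, hFP, ⟨fun j hj => (hFP.2 j hj).trans_le hFP.1, hsg.1.1⟩, hsg⟩

/-- On `Dev lev a (k - a)` the walk has no cut time between its passages of the levels `a` and `k`,
while on `Dev lev b (k - b)` the first passage of level `b` is one. -/
lemma Hyp.Dev_disjoint (h : Hyp lev Q) {k a b : ℕ} (hab : a < b) (hb : b < k) :
    Disjoint (Dev lev a (k - a)) (Dev lev b (k - b)) := by
  rw [Set.disjoint_left]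
  intro s hsa hsb
  obtain ⟨n, hn, hcn, hgn⟩ := mem_Dev hsa
  obtain ⟨m, hm, hcm, -⟩ := mem_Dev hsb
  have hn1 := h.FP_lt (Nat.cast_nonneg a) hn
  have hm1 := h.FP_lt (Nat.cast_nonneg b) hm
  have hab' : (a : ℝ) + 1 ≤ b := by exact_mod_cast hab
  have hbk' : (b : ℝ) + 1 ≤ k := by exact_mod_cast hb
  have hnm : n < m := by
    by_contra hc
    rcases (not_lt.1 hc).lt_or_eq with hlt | rfl
    · have := hcn.1 m hlt
      have := hm.1
      linarith
    · have := hm.1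
      linarith
  obtain ⟨j, rfl⟩ := Nat.exists_eq_add_of_le hnm.le
  have hR : R lev (shf n s) ≤ j := R_le (by omega) ((hcn.shift j).2 hcm)
  have h1 := (R_spec hgn.1).2.le hR
  have h2 : ((k - a : ℕ) : ℝ) ≤ lv lev (shf n s) (R lev (shf n s)) := hgn.2
  rw [Nat.cast_sub (by omega)] at h2
  rw [lv_add] at hm1
  have := hn.1
  linarith

/-- A renewal estimate: the mean height gain between cut times is finite, because each level `k`
is passed by at most one segment. -/
lemma Hyp.sum_Gain_le (h : Hyp lev Q) (k : ℕ) :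
    ∑ i ∈ Finset.range k, Q (Om lev) * Q (Gain lev (i + 1)) ≤ 1 := by
  have := h.prob
  rw [← Finset.sum_range_reflect]
  calc ∑ j ∈ Finset.range k, Q (Om lev) * Q (Gain lev (k - 1 - j + 1))
      ≤ ∑ j ∈ Finset.range k, Q (Dev lev j (k - j)) := by
        refine Finset.sum_le_sum fun j hj => ?_
        rw [Finset.mem_range] at hj
        rw [show k - 1 - j + 1 = k - j by omega]
        exact h.le_Dev j _
    _ = Q (⋃ j ∈ Finset.range k, Dev lev j (k - j)) := by
        rw [measure_biUnion_finset]
        · intro a ha b hb hab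
          simp only [Finset.coe_range, mem_Iio] at ha hb
          rcases lt_or_gt_of_ne hab with hlt | hlt
          · exact h.Dev_disjoint hlt hb
          · exact (h.Dev_disjoint hlt ha).symm
        · exact fun j _ => measurableSet_Dev _ _
    _ ≤ 1 := prob_le_one

lemma ofReal_le_tsum_ind (x : ℝ) (hx : 0 ≤ x) :
    ENNReal.ofReal x ≤ ∑' i : ℕ, if (i : ℝ) ≤ x then 1 else 0 := by
  refine le_trans ?_ (ENNReal.sum_le_tsum (Finset.range (⌊x⌋₊ + 1)))
  rw [Finset.sum_congr rfl (g := fun _ => (1 : ℝ≥0∞))]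
  · simp only [Finset.sum_const, Finset.card_range, nsmul_eq_mul, mul_one]
    rw [← ENNReal.ofReal_natCast]
    refine ENNReal.ofReal_le_ofReal ?_
    push_cast
    exact (Nat.lt_floor_add_one x).le
  · intro i hi
    rw [if_pos]
    rw [Finset.mem_range, Nat.lt_succ_iff] at hi
    exact (Nat.le_floor_iff hx).1 hi

lemma Hyp.integrable_gain (h : Hyp lev Q) (hq : Q (V0 lev) ≠ 0) :
    Integrable (fun s => lv lev s (R lev s)) (Q[|Om lev]) := by
  have := h.prob
  have hm : Measurable (fun s : ℕ → E => lv lev s (R lev s)) :=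
    measurable_list_fun (lev := lev) (lvl lev)
  refine ⟨hm.aestronglyMeasurable, ?_⟩
  have hnn : ∀ᵐ s ∂(Q[|Om lev]), 0 ≤ lv lev s (R lev s) := by
    filter_upwards [ae_Om (lev := lev) (Q := Q)] with s hs using hs.1.1 _
  rw [hasFiniteIntegral_iff_ofReal hnn]
  have h0 := h.Om_ne hq
  have ht : Q (Om lev) ≠ ⊤ := measure_ne_top _ _
  have hms : ∀ i : ℕ, MeasurableSet {s : ℕ → E | (i : ℝ) ≤ lv lev s (R lev s)} := fun i =>
    measurableSet_le measurable_const hm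
  have hsum : ∑' i : ℕ, Q (Gain lev (i + 1)) ≤ (Q (Om lev))⁻¹ := by
    refine ENNReal.tsum_le_of_sum_range_le fun k => ?_
    rw [ENNReal.le_inv_iff_mul_le, mul_comm, Finset.mul_sum]
    exact h.sum_Gain_le k
  calc ∫⁻ s, ENNReal.ofReal (lv lev s (R lev s)) ∂(Q[|Om lev])
      ≤ ∫⁻ s, ∑' i : ℕ, (if (i : ℝ) ≤ lv lev s (R lev s) then 1 else 0) ∂(Q[|Om lev]) := by
        refine lintegral_mono_ae ?_
        filter_upwards [hnn] with s hs using ofReal_le_tsum_ind _ hs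
    _ = ∑' i : ℕ, (Q[|Om lev]) {s | (i : ℝ) ≤ lv lev s (R lev s)} := by
        rw [lintegral_tsum fun i =>
          (Measurable.ite (hms i) measurable_const measurable_const).aemeasurable]
        refine tsum_congr fun i => ?_
        rw [← lintegral_indicator_one (hms i)]
        rfl
    _ = ∑' i : ℕ, (Q (Om lev))⁻¹ * Q (Gain lev i) := by
        refine tsum_congr fun i => ?_
        rw [cond_apply measurableSet_Om]; rfl
    _ = (Q (Om lev))⁻¹ * (Q (Gain lev 0) + ∑' i : ℕ, Q (Gain lev (i + 1))) := by
        rw [ENNReal.tsum_mul_left, tsum_eq_zero_add' ENNReal.summable]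
    _ ≤ (Q (Om lev))⁻¹ * (1 + (Q (Om lev))⁻¹) := by
        gcongr
        exact prob_le_one
    _ < ⊤ := by
        have : (Q (Om lev))⁻¹ < ⊤ := by simpa [pos_iff_ne_zero] using h0
        exact ENNReal.mul_lt_top this (ENNReal.add_lt_top.2 ⟨by simp, this⟩)

end CutLLN

end RWLaw

namespace RWLaw

open ProbabilityTheory

section Velocity

/-- A function squeezed between the values `σ i` at consecutive times `τ i` grows linearly at the
ratio of the growth rates of `σ` and `τ`. -/
lemma tendsto_of_segments {f : ℕ → ℝ} {τ : ℕ → ℕ} {σ : ℕ → ℝ} {G F : ℝ} (hτ0 : τ 0 = 0)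
    (hτ : StrictMono τ) (h0 : ∀ i, 0 ≤ σ i) (hlow : ∀ i n, τ i ≤ n → σ i ≤ f n)
    (hup : ∀ i n, n ≤ τ i → f n ≤ σ i) (hG : Tendsto (fun i : ℕ => σ i / i) atTop (𝓝 G))
    (hF : Tendsto (fun i : ℕ => (i : ℝ) / τ i) atTop (𝓝 F)) :
    Tendsto (fun n : ℕ => f n / n) atTop (𝓝 (G * F)) := by
  have hN : ∀ n, ∃ i, τ i ≤ n ∧ n < τ (i + 1) := by
    intro n
    have hex : ∃ m, n < τ m := ⟨n + 1, Nat.lt_of_lt_of_le (Nat.lt_succ_self n) (hτ.le_apply)⟩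
    obtain ⟨m, hm⟩ : ∃ m, Nat.find hex = m := ⟨_, rfl⟩
    have hs := Nat.find_spec hex
    rw [hm] at hs
    rcases m with _ | m
    · omega
    · exact ⟨m, not_lt.1 (Nat.find_min hex (by omega)), hs⟩
  choose N hN1 hN2 using hN
  have hNt : Tendsto N atTop atTop := by
    rw [tendsto_atTop]
    intro b
    filter_upwards [eventually_ge_atTop (τ b)] with n hn
    have := hτ.lt_iff_lt.1 (hn.trans_lt (hN2 n))
    omega
  have hr : Tendsto (fun i : ℕ => (i : ℝ) / (i + 1)) atTop (𝓝 1) :=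
    tendsto_natCast_div_add_atTop (1 : ℝ)
  have hlo : Tendsto (fun i : ℕ => σ i / τ (i + 1)) atTop (𝓝 (G * F)) := by
    have h1 := (hG.mul hr).mul ((tendsto_add_atTop_iff_nat 1).2 hF)
    rw [mul_one] at h1
    refine h1.congr' ?_
    filter_upwards [eventually_gt_atTop 0] with i hi
    have : (0 : ℝ) < i := by exact_mod_cast hi
    push_cast
    field_simp
  have hhi : Tendsto (fun i : ℕ => σ (i + 1) / τ i) atTop (𝓝 (G * F)) := by
    have h1 := (((tendsto_add_atTop_iff_nat 1).2 hG).mul (hr.inv₀ one_ne_zero)).mul hF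
    rw [inv_one, mul_one] at h1
    refine h1.congr' ?_
    filter_upwards [eventually_gt_atTop 0] with i hi
    have : (0 : ℝ) < i := by exact_mod_cast hi
    push_cast
    field_simp
  refine tendsto_of_tendsto_of_tendsto_of_le_of_le' (hlo.comp hNt) (hhi.comp hNt) ?_ ?_
  · filter_upwards [eventually_gt_atTop 0] with n hn
    have hn' : (0 : ℝ) < n := by exact_mod_cast hn
    exact div_le_div₀ ((h0 _).trans (hlow _ _ (hN1 n))) (hlow _ _ (hN1 n)) hn'
      (by exact_mod_cast (hN2 n).le)
  · filter_upwards [eventually_ge_atTop (τ 1)] with n hn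
    have hpos : 0 < N n := by
      have := hτ.lt_iff_lt.1 (hn.trans_lt (hN2 n))
      omega
    have hτp : 0 < τ (N n) := by rw [← hτ0]; exact hτ hpos
    refine div_le_div₀ (h0 _) (hup _ _ (hN2 n).le) (by exact_mod_cast hτp)
      (by exact_mod_cast hN1 n)

variable {E : Type*}

/-- The `n`-th successive cut time. -/
noncomputable def tau (lev : E → ℝ) (s : ℕ → E) (n : ℕ) : ℕ :=
  ∑ i ∈ Finset.range n, R lev ((th lev)^[i] s)

variable {lev : E → ℝ}

lemma tau_succ (s : ℕ → E) (n : ℕ) : tau lev s (n + 1) = tau lev s n + R lev ((th lev)^[n] s) :=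
  Finset.sum_range_succ _ _

lemma th_iterate (s : ℕ → E) (n : ℕ) : (th lev)^[n] s = shf (tau lev s n) s := by
  induction n with
  | zero => simp [tau]
  | succ n ih => rw [Function.iterate_succ_apply', th, tau_succ, ← shf_shf, ← ih]

lemma th_iterate_mem {s : ℕ → E} (hs : s ∈ Om lev) (n : ℕ) : (th lev)^[n] s ∈ Om lev := by
  induction n with
  | zero => exact hs
  | succ n ih => rw [Function.iterate_succ_apply']; exact th_mem ih

lemma tau_strictMono {s : ℕ → E} (hs : s ∈ Om lev) : StrictMono (tau lev s) := by
  refine strictMono_nat_of_lt_succ fun n => ?_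
  rw [tau_succ]
  have := (R_spec (th_iterate_mem hs n)).1
  omega

lemma cut_tau {s : ℕ → E} (hs : s ∈ Om lev) (n : ℕ) : Cut lev s (tau lev s n) := by
  induction n with
  | zero => exact ⟨by simp [tau], by simpa [tau] using hs.1⟩
  | succ n ih =>
    rw [tau_succ, ← ih.shift, ← th_iterate]
    exact (R_spec (th_iterate_mem hs n)).2

lemma lv_tau (s : ℕ → E) (n : ℕ) : lv lev s (tau lev s n) =
    ∑ i ∈ Finset.range n, lvl lev (pre ((th lev)^[i] s) (R lev ((th lev)^[i] s))) := by
  induction n with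
  | zero => simp [tau]
  | succ n ih => rw [tau_succ, lv_add, ih, Finset.sum_range_succ, th_iterate s n]; rfl

lemma lv_le_of_cut {s : ℕ → E} {n j : ℕ} (h : Cut lev s n) (hj : j ≤ n) :
    lv lev s j ≤ lv lev s n := by
  rcases hj.lt_or_eq with hlt | rfl
  · exact (h.1 j hlt).le
  · exact le_rfl

lemma tendsto_of_cuts {s : ℕ → E} (h : ∀ K : ℕ, ∃ n, (K : ℝ) ≤ lv lev s n ∧ Cut lev s n) :
    Tendsto (lv lev s) atTop atTop := by
  rw [tendsto_atTop]
  intro b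
  obtain ⟨K, hK⟩ := exists_nat_ge b
  obtain ⟨n, hn, hc⟩ := h K
  filter_upwards [eventually_ge_atTop n] with m hm
  exact hK.trans (hn.trans (hc.le hm))

lemma tendsto_div_of_shf {s : ℕ → E} {n : ℕ} {v : ℝ}
    (h : Tendsto (fun m : ℕ => lv lev (shf n s) m / m) atTop (𝓝 v)) :
    Tendsto (fun m : ℕ => lv lev s m / m) atTop (𝓝 v) := by
  rw [← tendsto_add_atTop_iff_nat n]
  have h1 : Tendsto (fun m : ℕ => lv lev s n / ((m + n : ℕ) : ℝ)) atTop (𝓝 0) :=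
    (tendsto_const_div_atTop_nhds_zero_nat (lv lev s n)).comp (tendsto_add_atTop_nat n)
  have h2 := h1.add (h.mul (tendsto_natCast_div_add_atTop (n : ℝ)))
  rw [zero_add, mul_one] at h2
  refine h2.congr' ?_
  filter_upwards [eventually_gt_atTop 0] with m hm
  have : (0 : ℝ) < m := by exact_mod_cast hm
  rw [add_comm m n, lv_add]
  push_cast
  field_simp
  ring

variable [Fintype E] [TopologicalSpace E] [DiscreteTopology E] [MeasurableSpace E]
  [BorelSpace E] {Q : Measure (ℕ → E)}

/-- The velocity is the ratio of the mean height gain and the mean duration of a segment between cut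
times, and `0` if the mean duration is infinite. -/
lemma Hyp.lln_Om (h : Hyp lev Q) (hq : Q (V0 lev) ≠ 0) :
    ∃ v : ℝ, ∀ᵐ s ∂(Q[|Om lev]), Tendsto (fun n : ℕ => lv lev s n / n) atTop (𝓝 v) := by
  have := h.isProb_cond hq
  have hG := h.slln hq (lvl lev) (h.integrable_gain hq)
  have hF : ∃ F : ℝ, ∀ᵐ s ∂(Q[|Om lev]), Tendsto (fun n : ℕ => (n : ℝ) / tau lev s n) atTop (𝓝 F) := by
    by_cases hintg : Integrable (fun s => (R lev s : ℝ)) (Q[|Om lev])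
    · refine ⟨(∫ s, (R lev s : ℝ) ∂(Q[|Om lev]))⁻¹, ?_⟩
      have hs := h.slln hq (fun l => (l.length : ℝ)) (by simpa using hintg)
      simp only [pre_length] at hs
      have hpos : 1 ≤ ∫ s, (R lev s : ℝ) ∂(Q[|Om lev]) := by
        have : ∫ s, (1 : ℝ) ∂(Q[|Om lev]) ≤ ∫ s, (R lev s : ℝ) ∂(Q[|Om lev]) := by
          refine integral_mono_ae (integrable_const _) hintg ?_
          filter_upwards [ae_Om (lev := lev) (Q := Q)] with s hs
          exact_mod_cast (R_spec hs).1
        simpa using this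
      filter_upwards [hs] with s hs
      refine (hs.inv₀ (by linarith)).congr fun n => ?_
      rw [inv_div, tau]
      push_cast
      rfl
    · refine ⟨0, ?_⟩
      filter_upwards [h.slln_top hq hintg] with s hs
      refine hs.inv_tendsto_atTop.congr fun n => ?_
      rw [Pi.inv_apply, inv_div, tau]
      push_cast
      rfl
  obtain ⟨F, hF⟩ := hF
  refine ⟨(∫ s, lvl lev (pre s (R lev s)) ∂(Q[|Om lev])) * F, ?_⟩
  filter_upwards [hG, hF, ae_Om (lev := lev) (Q := Q)] with s hG hF hs
  refine tendsto_of_segments (τ := tau lev s) (σ := fun n => lv lev s (tau lev s n)) (by simp [tau])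
    (tau_strictMono hs) (fun i => hs.1.1 _) (fun i n hn => (cut_tau hs i).le hn)
    (fun i n hn => lv_le_of_cut (cut_tau hs i) hn) ?_ hF
  simpa only [lv_tau] using hG

/-- The conclusion of the law of large numbers in one direction: a deterministic velocity on the
event of escape, and sublinear growth off it. -/
def OneSided (lev : E → ℝ) (Q : Measure (ℕ → E)) : Prop :=
  ∃ v : ℝ, ∀ᵐ s ∂Q,
    (Tendsto (lv lev s) atTop atTop → Tendsto (fun n : ℕ => lv lev s n / n) atTop (𝓝 v)) ∧
    (¬ Tendsto (lv lev s) atTop atTop → ∀ δ : ℝ, 0 < δ → ∀ᶠ n : ℕ in atTop, lv lev s n ≤ δ * n)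

lemma Hyp.oneSided_of_ne (h : Hyp lev Q) (hq : Q (V0 lev) ≠ 0) : OneSided lev Q := by
  have := h.prob
  obtain ⟨v, hv⟩ := h.lln_Om hq
  refine ⟨v, ?_⟩
  obtain ⟨T, hTs, hTm, hT0⟩ := exists_measurable_superset_of_null (ae_iff.1 hv)
  have hT : Q (Om lev ∩ T) = 0 := by
    rw [cond_apply measurableSet_Om] at hT0
    exact (mul_eq_zero.1 hT0).resolve_left (ENNReal.inv_ne_zero.2 (measure_ne_top _ _))
  have hbad : ∀ᵐ s ∂Q, ∀ p : List E, Rec lev p → ¬ (s ∈ cyl p ∩ shf p.length ⁻¹' (Om lev ∩ T)) := by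
    rw [ae_all_iff]
    intro p
    by_cases hp : Rec lev p
    · have h1 := h.factor_V0 hp (measurableSet_Om.inter hTm) fun s hs => hs.1.1
      rw [hT, mul_zero] at h1
      filter_upwards [measure_eq_zero_iff_ae_notMem.1 h1] with s hs _ using hs
    · exact ae_of_all _ fun s hp' => absurd hp' hp
  filter_upwards [hbad, h.exists_cut hq] with s hbad hcut
  have key : (∀ K : ℕ, ∃ n, (K : ℝ) ≤ lv lev s n) → Tendsto (lv lev s) atTop atTop ∧
      Tendsto (fun n : ℕ => lv lev s n / n) atTop (𝓝 v) := by
    intro hsup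
    have hc := hcut hsup
    refine ⟨tendsto_of_cuts hc, ?_⟩
    obtain ⟨n, -, hn⟩ := hc 0
    have hO := shf_mem_Om hc hn
    refine tendsto_div_of_shf (n := n) ?_
    by_contra hnt
    refine hbad (pre s n) ((Rec_pre lev).2 hn.1) ⟨mem_cyl_pre _ _, ?_⟩
    rw [pre_length]
    exact ⟨hO, hTs hnt⟩
  constructor
  · intro ht
    refine (key fun K => ?_).2
    exact (ht.eventually_ge_atTop (K : ℝ)).exists
  · intro hnt δ hδ
    have : ¬ ∀ K : ℕ, ∃ n, (K : ℝ) ≤ lv lev s n := fun hs => hnt (key hs).1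
    push Not at this
    obtain ⟨K, hK⟩ := this
    obtain ⟨N, hN⟩ := exists_nat_ge ((K : ℝ) / δ)
    filter_upwards [eventually_ge_atTop N] with n hn
    rw [div_le_iff₀ hδ] at hN
    have : (N : ℝ) ≤ n := by exact_mod_cast hn
    nlinarith [hK n]

end Velocity

end RWLaw

namespace RWLaw

/-! ### Escape events and their probabilities -/

section Escape

variable {E : Type*} (lev : E → ℝ)

/-- The walk reaches level `L` before going negative. -/
def Up (L : ℕ) : Set (ℕ → E) := {s | ∃ r, (L : ℝ) ≤ lv lev s r ∧ ∀ j ≤ r, 0 ≤ lv lev s j}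

/-- After first reaching level `k`, the walk makes `b` steps from levels at least `k`, and then
climbs by `L` without going below the level at which this climb starts; all this happens before
level `k + M` is passed. -/
def Esc (k : ℝ) (b : ℕ) (L M : ℝ) : Set (ℕ → E) :=
  {s | ∃ n t r, FP lev k s n ∧ pre (shf n s) t ∈ Mid lev k b (pre s n) ∧
    (∀ j ≤ r, 0 ≤ lv lev (shf (n + t) s) j) ∧ L ≤ lv lev (shf (n + t) s) r ∧
    ∀ j < n + t + r, lv lev s j < k + M}

variable {lev}

lemma shf_pre_congr {s s' : ℕ → E} {N n : ℕ} (h : pre s N = pre s' N) {t : ℕ} (hn : n + t ≤ N) :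
    pre (shf n s) t = pre (shf n s') t := by
  rw [pre_eq_iff] at h ⊢
  intro i hi
  exact h _ (by omega)

/-- `Esc` is decided by the time level `k + M` is passed. -/
lemma Esc_congr {k k' L M : ℝ} {b : ℕ} {s s' : ℕ → E} {N : ℕ} (hs : s ∈ Esc lev k b L M)
    (hk : k + M ≤ k') (hN : FP lev k' s N) (h : pre s N = pre s' N) : s' ∈ Esc lev k b L M := by
  obtain ⟨n, t, r, h1, h2, h3, h4, h5⟩ := hs
  have hle : n + t + r ≤ N := by
    by_contra hc
    have := h5 N (by omega)
    have := hN.1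
    linarith
  have hn : pre s n = pre s' n := pre_eq_of_le h (by omega)
  have ht : pre (shf n s) t = pre (shf n s') t := shf_pre_congr h (by omega)
  have hr : pre (shf (n + t) s) r = pre (shf (n + t) s') r := shf_pre_congr h (by omega)
  refine ⟨n, t, r, h1.congr lev hn, ?_, fun j hj => ?_, ?_, fun j hj => ?_⟩
  · rw [← hn, ← ht]; exact h2
  · rw [← lv_congr lev hr hj]; exact h3 j hj
  · rw [← lv_congr lev hr le_rfl]; exact h4
  · rw [← lv_congr lev h (by omega)]; exact h5 j hj

variable [Fintype E] [TopologicalSpace E] [DiscreteTopology E] [MeasurableSpace E]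
  [BorelSpace E] {Q : Measure (ℕ → E)}

lemma measurableSet_Up (L : ℕ) : MeasurableSet (Up lev L) := by
  have : Up lev L = ⋃ r, ({s | (L : ℝ) ≤ lv lev s r} ∩ ⋂ j, ⋂ (_ : j ≤ r), {s | 0 ≤ lv lev s j}) := by
    ext s; simp [Up]
  rw [this]
  exact MeasurableSet.iUnion fun r => (measurableSet_le measurable_const (measurable_lv r)).inter
    (MeasurableSet.iInter fun j => MeasurableSet.iInter fun _ =>
      measurableSet_le measurable_const (measurable_lv j))

lemma Up_antitone : Antitone (Up lev) := by
  rintro a b hab s ⟨r, hr, hj⟩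
  refine ⟨r, le_trans ?_ hr, hj⟩
  exact_mod_cast hab

/-- The events `Up lev L` decrease to a subset of `V0`. -/
lemma Hyp.tendsto_Up (h : Hyp lev Q) (hq : Q (V0 lev) = 0) :
    Tendsto (fun L => Q (Up lev L)) atTop (𝓝 0) := by
  have := h.prob
  have h1 := tendsto_measure_iInter_atTop (μ := Q) (s := Up lev)
    (fun L => (measurableSet_Up L).nullMeasurableSet) Up_antitone ⟨0, measure_ne_top _ _⟩
  have h2 : ⋂ L, Up lev L ⊆ V0 lev := by
    intro s hs
    rw [mem_iInter] at hs
    refine ⟨fun n => ?_, fun K => ?_⟩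
    · obtain ⟨r, hr, hj⟩ := hs n
      have : (n : ℝ) ≤ r := hr.trans (h.lv_le s r)
      exact hj n (by exact_mod_cast this)
    · obtain ⟨r, hr, -⟩ := hs K
      exact ⟨r, hr⟩
  rwa [measure_mono_null h2 hq] at h1

/-- Given the past up to the first passage of level `k`, an escape costs at most the probability of
climbing by `L` in a fresh environment, times the number of ways to choose the `b` steps before it. -/
lemma Hyp.Esc_le (h : Hyp lev Q) {k : ℝ} {p : List E} (hp : p ∈ minl (fun l => k ≤ lvl lev l))
    (b L : ℕ) (M : ℝ) :
    Q (cyl p ∩ Esc lev k b L M) ≤ (Fintype.card E : ℝ≥0∞) ^ b * Q (Up lev L) * Q (cyl p) := by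
  set G : Set (List E) := {g | g ∈ minl (fun l => (L : ℝ) ≤ lvl lev l) ∧ NN lev g} with hG
  have hcov : cyl p ∩ Esc lev k b L M ⊆
      ⋃ m : Mid lev k b p, ⋃ g : G, cyl (p ++ (m : List E) ++ (g : List E)) := by
    rintro s ⟨hsp, n, t, r, h1, h2, h3, h4, -⟩
    have hpre : pre s p.length = p := hsp
    have hFP : FP lev k s p.length := FP_of_mem_minl lev (by rw [hpre]; exact hp)
    obtain rfl := h1.unique lev hFP
    rw [hpre] at h2
    obtain ⟨r', hr', hF⟩ := exists_FP lev h4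
    simp only [mem_iUnion]
    refine ⟨⟨_, h2⟩, ⟨pre (shf (p.length + t) s) r', hF.mem_minl, ?_⟩, ?_⟩
    · exact (NN_pre lev).2 fun j hj => h3 j (hj.trans hr')
    · rw [mem_cyl_append, mem_cyl_append]
      refine ⟨⟨hsp, mem_cyl_pre _ _⟩, ?_⟩
      rw [List.length_append, pre_length]
      exact mem_cyl_pre _ _
  calc Q (cyl p ∩ Esc lev k b L M)
      ≤ ∑' m : Mid lev k b p, ∑' g : G, Q (cyl (p ++ (m : List E) ++ (g : List E))) := by
        refine (measure_mono hcov).trans ((measure_iUnion_le _).trans ?_)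
        exact ENNReal.tsum_le_tsum fun m => measure_iUnion_le _
    _ ≤ (Fintype.card E : ℝ≥0∞) ^ b * Q (cyl p) * ∑' g : G, Q (cyl (g : List E)) :=
        h.script k p hp b G fun g hg => hg.2
    _ ≤ (Fintype.card E : ℝ≥0∞) ^ b * Q (cyl p) * Q (Up lev L) := by
        gcongr
        refine tsum_cyl_le Q ((minl_prefixFree _).mono fun g hg => hg.1) fun g hg s hs => ?_
        have hpre : pre s g.length = g := hs
        refine ⟨g.length, ?_, (NN_pre lev).1 (by rw [hpre]; exact hg.2)⟩
        rw [lv, hpre]; exact hg.1.1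
    _ = _ := by ring

/-- Events attached to levels, each decided before the level has been exceeded by `M` and of
conditional probability at most `ε` given the past before the level, are dominated by independent
events of probability `ε` along levels which are `M` apart. -/
lemma prob_spaced_le [IsProbabilityMeasure Q] {Ev : ℕ → Set (ℕ → E)} {M : ℕ} {ε : ℝ≥0∞}
    (hreach : ∀ k s, s ∈ Ev k → ∃ n, FP lev k s n)
    (hdet : ∀ (k k' : ℕ) (s s' : ℕ → E) (N : ℕ), s ∈ Ev k → k + M ≤ k' → FP lev k' s N →
      pre s N = pre s' N → s' ∈ Ev k)
    (hbd : ∀ (k : ℕ) (p : List E), p ∈ minl (fun l => (k : ℝ) ≤ lvl lev l) →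
      Q (cyl p ∩ Ev k) ≤ ε * Q (cyl p))
    (r : ℕ) (K : Finset ℕ) : Q {s | ∀ i ∈ K, s ∈ Ev (r + M * i)} ≤ ε ^ K.card := by
  induction K using Finset.induction_on_max with
  | empty => simp
  | insert a K ha ih =>
    set A : Set (ℕ → E) := {s | ∀ i ∈ K, s ∈ Ev (r + M * i)} with hA
    set k := r + M * a with hk
    set F : Set (List E) := {p | p ∈ minl (fun l => (k : ℝ) ≤ lvl lev l) ∧ cyl p ⊆ A} with hF
    have hset : {s | ∀ i ∈ insert a K, s ∈ Ev (r + M * i)} = A ∩ Ev k := by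
      ext s
      simp only [Finset.mem_insert, forall_eq_or_imp, mem_ofPred_eq, mem_inter_iff, hA, hk]
      exact and_comm
    rw [hset, Finset.card_insert_of_notMem fun hc => lt_irrefl a (ha a hc), pow_succ']
    have hcov : ∀ s ∈ A ∩ Ev k, ∃ p ∈ F, s ∈ cyl p := by
      rintro s ⟨hsA, hsk⟩
      obtain ⟨n, hn⟩ := hreach k s hsk
      refine ⟨pre s n, ⟨hn.mem_minl, fun s' hs' i hi => ?_⟩, mem_cyl_pre _ _⟩
      refine hdet _ k s s' n (hsA i hi) ?_ hn ?_
      · have := ha i hi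
        rw [hk]
        have : M * (i + 1) ≤ M * a := Nat.mul_le_mul_left _ this
        rw [mul_add] at this
        omega
      · have : pre s' n = pre s n := by simpa [mem_cyl] using hs'
        exact this.symm
    calc Q (A ∩ Ev k) ≤ ∑' p : F, Q (A ∩ Ev k ∩ cyl (p : List E)) := measure_le_tsum Q hcov
      _ ≤ ∑' p : F, ε * Q (cyl (p : List E)) := by
          refine ENNReal.tsum_le_tsum fun p => (measure_mono ?_).trans (hbd k p p.2.1)
          exact fun s hs => ⟨hs.2, hs.1.2⟩
      _ = ε * ∑' p : F, Q (cyl (p : List E)) := ENNReal.tsum_mul_left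
      _ ≤ ε * Q A := by
          gcongr
          exact tsum_cyl_le Q ((minl_prefixFree _).mono fun p hp => hp.1) fun p hp => hp.2
      _ ≤ ε * ε ^ K.card := by gcongr

end Escape

end RWLaw

namespace RWLaw

/-! ### Counting levels on a fast walk -/

section Counting

variable {E : Type*} {lev : E → ℝ}

lemma lv_lip (hstep : ∀ e, |lev e| ≤ 1) (s : ℕ → E) (n : ℕ) :
    |lv lev s (n + 1) - lv lev s n| ≤ 1 := by
  rw [lv_succ]; simpa using hstep (s n)

lemma FP_lt_of_step (hstep : ∀ e, |lev e| ≤ 1) {k : ℝ} (hk : 0 ≤ k) {s : ℕ → E} {n : ℕ}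
    (hn : FP lev k s n) : lv lev s n < k + 1 := by
  rcases n with _ | n
  · simp; linarith
  · have := (abs_le.1 (lv_lip hstep s n)).2
    have := hn.2 n (Nat.lt_succ_self n)
    linarith

lemma FP_mono {k k' : ℝ} {s : ℕ → E} {a a' : ℕ} (h : FP lev k s a) (h' : FP lev k' s a')
    (hk : k ≤ k') : a ≤ a' := by
  by_contra hc
  have := h.2 a' (by omega)
  have := h'.1
  linarith

lemma FP_strictMono {k k' : ℝ} {s : ℕ → E} {a a' : ℕ} (h : FP lev k s a) (h' : FP lev k' s a')
    (hk : k ≤ k') (hlt : lv lev s a < k') : a < a' := by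
  refine lt_of_le_of_ne (FP_mono h h' hk) ?_
  rintro rfl
  have := h'.1
  linarith

/-- If between the first passages of `k + L` and `k + L'` the slab `[k, k + 1)` is not visited, then
from its last visit to the slab before that the walk climbs to `k + L'` without going back below,
which is one of the escape events `Esc`. -/
lemma Esc_of_gap (hstep : ∀ e, |lev e| ≤ 1) {k L L' M : ℕ} {s : ℕ → E} {n a e : ℕ}
    (hn : FP lev k s n) (ha : FP lev ((k + L : ℕ) : ℝ) s a)
    (he : FP lev ((k + L' : ℕ) : ℝ) s e) (hL : 1 ≤ L) (hLL' : L < L') (hM : L' ≤ M)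
    (hgap : ∀ v, a ≤ v → v < e → ¬ ((k : ℝ) ≤ lv lev s v ∧ lv lev s v < k + 1)) {N B : ℕ}
    (hN : a ≤ N)
    (hocc : ((Finset.range N).filter fun t => (k : ℝ) ≤ lv lev s t ∧
      lv lev s t < ((k + L : ℕ) : ℝ)).card ≤ B) :
    ∃ b ≤ B, s ∈ Esc lev k b (L' - 1) M := by
  set S := lv lev s with hS
  have hL1 : (1 : ℝ) ≤ L := by exact_mod_cast hL
  have hL2 : (L : ℝ) + 1 ≤ L' := by exact_mod_cast hLL'
  have hM1 : (L' : ℝ) ≤ M := by exact_mod_cast hM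
  have hn1 : S n < k + 1 := FP_lt_of_step hstep (Nat.cast_nonneg k) hn
  have ha1 := FP_lt_of_step hstep (Nat.cast_nonneg (k + L)) ha
  have haS := ha.1
  have heS := he.1
  have he2 := he.2
  have ha2 := ha.2
  push_cast at ha1 haS heS he2 ha2
  have hna : n < a := FP_strictMono hn ha (by push_cast; linarith) (by push_cast; linarith)
  have hae : a < e := FP_strictMono ha he (by push_cast; linarith) (by push_cast; linarith)
  set P : ℕ → Prop := fun j => (k : ℝ) ≤ S j ∧ S j < k + 1 with hP
  have hPn : P n := ⟨hn.1, hn1⟩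
  obtain ⟨t, hta, hnt, hPt, hlast⟩ : ∃ t, t < a ∧ n ≤ t ∧ P t ∧ ∀ j, t < j → j ≤ a → ¬ P j := by
    refine ⟨Nat.findGreatest P a, ?_, Nat.le_findGreatest hna.le hPn,
      Nat.findGreatest_spec hna.le hPn, fun j h1 h2 => Nat.findGreatest_is_greatest h1 h2⟩
    refine lt_of_le_of_ne (Nat.findGreatest_le a) fun hc => ?_
    have h1 := Nat.findGreatest_spec (P := P) hna.le hPn
    rw [hc] at h1
    have := h1.2
    linarith
  have c1 : ∀ d, t < a - d → (k : ℝ) + 1 ≤ S (a - d) := by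
    intro d
    induction d with
    | zero => intro _; simp only [Nat.sub_zero]; linarith
    | succ d ih =>
      intro hd
      have h1 := ih (by omega)
      have h2 := (abs_le.1 (lv_lip hstep s (a - (d + 1)))).2
      rw [show a - (d + 1) + 1 = a - d by omega] at h2
      by_contra hc
      push Not at hc
      refine hlast _ hd (by omega) ⟨?_, hc⟩
      linarith
  have c2 : ∀ d, a + d ≤ e → (k : ℝ) + 1 ≤ S (a + d) := by
    intro d
    induction d with
    | zero => intro _; simp only [Nat.add_zero]; linarith
    | succ d ih =>
      intro hd
      rcases hd.lt_or_eq with hlt | heq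
      · have h1 := ih (by omega)
        have h2 := (abs_le.1 (lv_lip hstep s (a + d))).1
        by_contra hc
        push Not at hc
        refine hgap (a + (d + 1)) (by omega) hlt ⟨?_, hc⟩
        rw [← add_assoc]
        linarith
      · rw [heq]; linarith
  have c3 : ∀ j, t < j → j ≤ e → (k : ℝ) + 1 ≤ S j := by
    intro j h1 h2
    rcases le_total j a with h | h
    · have := c1 (a - j) (by omega)
      rwa [show a - (a - j) = j by omega] at this
    · have := c2 (j - a) (by omega)
      rwa [show a + (j - a) = j by omega] at this
  obtain ⟨u, rfl⟩ := Nat.exists_eq_add_of_le hnt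
  obtain ⟨r, rfl⟩ : ∃ r, e = n + u + r := Nat.exists_eq_add_of_le (by omega)
  have hsub : ∀ j, lv lev (shf (n + u) s) j = S (n + u + j) - S (n + u) := by
    intro j; rw [hS, lv_add]; ring
  refine ⟨upc lev (k - lvl lev (pre s n)) (pre (shf n s) u), ?_, n, u, r, hn, ⟨?_, rfl⟩, ?_, ?_, ?_⟩
  · refine le_trans ?_ hocc
    rw [upc, pre_length, ← Finset.card_filter]
    refine Finset.card_le_card_of_injOn (fun j => n + j) ?_ (fun a _ b _ h => by simpa using h)
    intro j hj
    simp only [Finset.coe_filter, Finset.mem_range, mem_ofPred_eq] at hj ⊢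
    obtain ⟨hju, hj⟩ := hj
    rw [pre_take _ hju.le] at hj
    change (k : ℝ) - S n ≤ lv lev (shf n s) j at hj
    refine ⟨by omega, ?_, ?_⟩
    · rw [hS, lv_add]; linarith
    · push_cast; exact ha2 _ (by omega)
  · change (k : ℝ) ≤ S n + lv lev (shf n s) u
    rw [hS, ← lv_add]; exact hPt.1
  · intro j hj
    rw [hsub]
    rcases Nat.eq_zero_or_pos j with rfl | hj0
    · simp
    · have := c3 (n + u + j) (by omega) (by omega)
      have := hPt.2
      linarith
  · rw [hsub]
    have := hPt.2
    linarith
  · intro j hj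
    have := he2 j hj
    linarith

/-- A level `k` whose slabs `[k, k + L i)`, `i < m`, are occupied for short times only is the level
of an escape event: at most `B 0 = m` visits to `[k, k + 1)` cannot meet all of the `m + 1` disjoint
time intervals between passages of the levels `k`, `k + L 0`, ..., `k + L m`. -/
lemma Esc_of_good (hstep : ∀ e, |lev e| ≤ 1) {m : ℕ} (hm : 0 < m) {L B : ℕ → ℕ} (hL0 : L 0 = 1)
    (hL : StrictMono L) (hB0 : B 0 = m) {k u N : ℕ} {s : ℕ → E} (hku : k + L m ≤ u)
    (hu : ∃ n ≤ N, (u : ℝ) ≤ lv lev s n)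
    (hocc : ∀ i < m, ((Finset.range N).filter fun t => (k : ℝ) ≤ lv lev s t ∧
      lv lev s t < ((k + L i : ℕ) : ℝ)).card ≤ B i) :
    ∃ i < m, ∃ b ≤ B i, s ∈ Esc lev k b (L (i + 1) - 1) (L m) := by
  have hT : ∀ j : ℕ, j ≤ u → ∃ t ≤ N, FP lev (j : ℝ) s t := by
    intro j hj
    obtain ⟨n, hnN, hn⟩ := hu
    obtain ⟨t, ht, hF⟩ := exists_FP lev (k := (j : ℝ)) (le_trans (by exact_mod_cast hj) hn)
    exact ⟨t, ht.trans hnN, hF⟩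
  choose! T hTN hTF using hT
  have hmono : ∀ i j, i ≤ j → j ≤ u → T i ≤ T j := fun i j hij hj =>
    FP_mono (hTF i (hij.trans hj)) (hTF j hj) (by exact_mod_cast hij)
  -- the endpoints `k, k + L 0, ..., k + L m` of the `m + 1` passages
  set L' : ℕ → ℕ := fun i => if i = 0 then 0 else L (i - 1) with hL'
  have hL'mono : Monotone L' := by
    refine monotone_nat_of_le_succ fun i => ?_
    rcases i with _ | i
    · simp [hL']
    · simpa [hL'] using (hL (Nat.lt_succ_self i)).le
  have hL'm : ∀ i ≤ m + 1, k + L' i ≤ u := by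
    intro i hi
    have h1 := hL'mono hi
    simp only [hL', Nat.add_one_ne_zero, if_false, Nat.add_sub_cancel] at h1 ⊢
    omega
  by_contra hno
  push Not at hno
  have hvis : ∀ i ≤ m, ∃ v, T (k + L' i) ≤ v ∧ v < T (k + L' (i + 1)) ∧
      (k : ℝ) ≤ lv lev s v ∧ lv lev s v < k + 1 := by
    intro i hi
    rcases i with _ | i
    · have h0 := hTF k (by omega)
      have h1 := hTF (k + 1) (by have := hL'm 1 (by omega); simpa [hL', hL0] using this)
      have h2 := FP_lt_of_step hstep (Nat.cast_nonneg k) h0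
      refine ⟨T k, by simp [hL'], ?_, h0.1, h2⟩
      simp only [hL', zero_add, one_ne_zero, if_false, Nat.sub_self, hL0]
      exact FP_strictMono h0 h1 (by push_cast; linarith) (by push_cast; linarith)
    · by_contra hc
      push Not at hc
      have e1 : L' (i + 1) = L i := by simp [hL']
      have e2 : L' (i + 1 + 1) = L (i + 1) := by simp [hL']
      have u1 := hL'm (i + 1) (by omega)
      have u2 := hL'm (i + 1 + 1) (by omega)
      rw [e1, e2] at hc
      rw [e1] at u1
      rw [e2] at u2
      obtain ⟨b, hb, hE⟩ := Esc_of_gap hstep (M := L m) (hTF k (by omega)) (hTF _ u1) (hTF _ u2)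
        (by rw [← hL0]; exact hL.monotone (Nat.zero_le i)) (hL (Nat.lt_succ_self i))
        (hL.monotone (by omega))
        (fun v h1 h2 h3 => absurd h3.2 (not_lt.2 (hc v h1 h2 h3.1))) (hTN _ u1)
        (hocc i (by omega))
      exact hno i (by omega) b hb hE
  choose! v hv1 hv2 hv3 hv4 using hvis
  have hlt : ∀ i j, i < j → j ≤ m → v i < v j := fun i j hij hj =>
    (hv2 i (by omega)).trans_le ((hmono _ _ (Nat.add_le_add_left (hL'mono hij) k)
      (hL'm _ (by omega))).trans (hv1 j hj))
  have hcard : (Finset.range (m + 1)).card ≤ B 0 := by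
    refine le_trans (Finset.card_le_card_of_injOn v ?_ ?_) (hocc 0 hm)
    · intro i hi
      simp only [Finset.coe_range, mem_Iio] at hi
      simp only [Finset.coe_filter, Finset.mem_range, mem_ofPred_eq]
      refine ⟨(hv2 i (by omega)).trans_le (hTN _ (hL'm _ (by omega))), hv3 i (by omega), ?_⟩
      rw [hL0]; push_cast; exact hv4 i (by omega)
    · intro i hi j hj hij
      simp only [Finset.coe_range, mem_Iio] at hi hj
      rcases lt_trichotomy i j with h | h | h
      · exact absurd hij (hlt i j h (by omega)).ne
      · exact h
      · exact absurd hij (hlt j i h (by omega)).ne'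
  rw [Finset.card_range, hB0] at hcard
  omega

/-- Each time contributes to at most `L` of the slabs `[k, k + L)`. -/
lemma sum_occ_le (S : ℕ → ℝ) (u N L : ℕ) :
    ∑ k ∈ Finset.range u, ((Finset.range N).filter fun t => (k : ℝ) ≤ S t ∧
      S t < ((k + L : ℕ) : ℝ)).card ≤ N * L := by
  have h1 := Finset.sum_card_bipartiteAbove_eq_sum_card_bipartiteBelow
    (s := Finset.range u) (t := Finset.range N)
    (fun (k t : ℕ) => (k : ℝ) ≤ S t ∧ S t < ((k + L : ℕ) : ℝ))
  simp only [Finset.bipartiteAbove, Finset.bipartiteBelow] at h1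
  rw [h1]
  refine (Finset.sum_le_card_nsmul _ _ L fun t _ => ?_).trans (by simp)
  refine le_trans (Finset.card_le_card (t := Finset.Ico (⌊S t⌋₊ + 1 - L) (⌊S t⌋₊ + 1)) ?_) ?_
  · intro k hk
    rw [Finset.mem_filter] at hk
    obtain ⟨-, h2, h3⟩ := hk
    have h4 : k ≤ ⌊S t⌋₊ := Nat.le_floor h2
    have h5 : ⌊S t⌋₊ < k + L := by
      have := (Nat.floor_le ((Nat.cast_nonneg k).trans h2)).trans_lt h3
      exact_mod_cast this
    rw [Finset.mem_Ico]
    omega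
  · rw [Nat.card_Ico]; omega

/-- On a walk that reaches level `u` by time `C * u`, about half of the levels below `u` are levels
of an escape event. -/
lemma count_Esc (hstep : ∀ e, |lev e| ≤ 1) {C : ℕ} (hC : 0 < C) {L B : ℕ → ℕ}
    (hL0 : L 0 = 1) (hL : StrictMono L) (hB : ∀ i, B i = 2 ^ (i + 2) * C * L i) {u : ℕ} {s : ℕ → E}
    (hu : ∃ n ≤ C * u, (u : ℝ) ≤ lv lev s n) :
    u ≤ 2 * (((Finset.range u).filter fun k : ℕ => ∃ i < 4 * C, ∃ b ≤ B i,
      s ∈ Esc lev k b (L (i + 1) - 1) (L (4 * C))).card + L (4 * C)) := by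
  set m := 4 * C with hm
  set Good := (Finset.range u).filter fun k : ℕ => ∃ i < m, ∃ b ≤ B i,
      s ∈ Esc lev k b (L (i + 1) - 1) (L m) with hGood
  set occ : ℕ → ℕ → ℕ := fun i k => ((Finset.range (C * u)).filter fun t => (k : ℝ) ≤ lv lev s t ∧
      lv lev s t < ((k + L i : ℕ) : ℝ)).card with hocc
  set Bad : ℕ → Finset ℕ := fun i => (Finset.range u).filter fun k => B i < occ i k with hBad
  have hLpos : ∀ i, 0 < L i := fun i => by
    have := hL.monotone (Nat.zero_le i); omega
  have hBad1 : ∀ i, (Bad i).card * 2 ^ (i + 2) ≤ u := by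
    intro i
    have h1 : (Bad i).card * B i ≤ C * u * L i := by
      refine le_trans ?_ (sum_occ_le (lv lev s) u (C * u) (L i))
      rw [← smul_eq_mul]
      refine (Finset.card_nsmul_le_sum (Bad i) (occ i) (B i) fun k hk => ?_).trans ?_
      · exact (Finset.mem_filter.1 hk).2.le
      · exact Finset.sum_le_sum_of_subset (Finset.filter_subset _ _)
    rw [hB] at h1
    have h2 : 0 < C * L i := Nat.mul_pos hC (hLpos i)
    refine Nat.le_of_mul_le_mul_right ?_ h2
    calc (Bad i).card * 2 ^ (i + 2) * (C * L i) = (Bad i).card * (2 ^ (i + 2) * C * L i) := by ring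
      _ ≤ C * u * L i := h1
      _ = u * (C * L i) := by ring
  have hBad2 : ∀ j, 2 * ∑ i ∈ Finset.range j, ((Bad i).card : ℝ) ≤ u * (1 - (1 / 2) ^ j) := by
    intro j
    induction j with
    | zero => simp
    | succ j ih =>
      rw [Finset.sum_range_succ]
      have h1 : ((Bad j).card : ℝ) * 2 ^ (j + 2) ≤ u := by exact_mod_cast hBad1 j
      have h2 : ((Bad j).card : ℝ) ≤ u * (1 / 2) ^ (j + 2) := by
        rw [one_div, inv_pow, ← div_eq_mul_inv, le_div_iff₀ (by positivity)]
        exact h1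
      have e1 : ((1 : ℝ) / 2) ^ (j + 2) = (1 / 2) ^ j / 4 := by ring
      have e2 : ((1 : ℝ) / 2) ^ (j + 1) = (1 / 2) ^ j / 2 := by ring
      rw [e1] at h2
      rw [e2]
      nlinarith
  have hBad3 : 2 * ∑ i ∈ Finset.range m, (Bad i).card ≤ u := by
    have h1 := hBad2 m
    have h2 : (0 : ℝ) ≤ u * (1 / 2) ^ m := by positivity
    have h3 : (2 : ℝ) * ∑ i ∈ Finset.range m, ((Bad i).card : ℝ) ≤ u := by linarith
    exact_mod_cast h3
  have hcov : Finset.range u ⊆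
      Good ∪ ((Finset.range m).biUnion Bad ∪ Finset.Ico (u - L m) u) := by
    intro k hk
    rw [Finset.mem_union, Finset.mem_union, Finset.mem_biUnion]
    by_cases h1 : k + L m ≤ u
    · by_cases h2 : ∃ i ∈ Finset.range m, k ∈ Bad i
      · exact Or.inr (Or.inl h2)
      · left
        push Not at h2
        refine Finset.mem_filter.2 ⟨hk, ?_⟩
        refine Esc_of_good hstep (by omega) hL0 hL (by rw [hB, hL0, hm]; ring) h1 hu fun i hi => ?_
        by_contra hc
        exact h2 i (Finset.mem_range.2 hi) (Finset.mem_filter.2 ⟨hk, not_le.1 hc⟩)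
    · refine Or.inr (Or.inr (Finset.mem_Ico.2 ⟨by omega, Finset.mem_range.1 hk⟩))
  have h1 := Finset.card_le_card hcov
  have h2 := Finset.card_union_le Good ((Finset.range m).biUnion Bad ∪ Finset.Ico (u - L m) u)
  have h3 := Finset.card_union_le ((Finset.range m).biUnion Bad) (Finset.Ico (u - L m) u)
  have h4 := Finset.card_biUnion_le (s := Finset.range m) (t := Bad)
  rw [Finset.card_range] at h1
  rw [Nat.card_Ico] at h3
  omega

/-- Pigeonhole over residue classes modulo `M`. -/
lemma exists_residue {M I : ℕ} (hM : 0 < M) (p : ℕ → Prop)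
    (h : M * I ≤ 2 * (((Finset.range (M * I)).filter p).card + M)) :
    ∃ r < M, I ≤ 2 * ((Finset.range I).filter fun i => p (r + M * i)).card + 2 := by
  by_contra hc
  push Not at hc
  have h1 : ((Finset.range (M * I)).filter p).card ≤
      ∑ r ∈ Finset.range M, ((Finset.range I).filter fun i => p (r + M * i)).card := by
    refine le_trans (Finset.card_le_card (t := (Finset.range M).biUnion fun r =>
      ((Finset.range I).filter fun i => p (r + M * i)).image fun i => r + M * i) ?_)
      (Finset.card_biUnion_le.trans (Finset.sum_le_sum fun r _ => Finset.card_image_le))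
    intro k hk
    rw [Finset.mem_filter, Finset.mem_range] at hk
    have hkM := Nat.mod_add_div k M
    simp only [Finset.mem_biUnion, Finset.mem_image, Finset.mem_filter, Finset.mem_range]
    refine ⟨k % M, Nat.mod_lt _ hM, k / M, ⟨Nat.div_lt_of_lt_mul hk.1, ?_⟩, hkM⟩
    rw [hkM]; exact hk.2
  have h2 : ∑ r ∈ Finset.range M, (2 * ((Finset.range I).filter fun i => p (r + M * i)).card + 3) ≤
      M * I := by
    refine (Finset.sum_le_card_nsmul _ _ I fun r hr => ?_).trans (by simp)
    have := hc r (Finset.mem_range.1 hr)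
    omega
  rw [Finset.sum_add_distrib, ← Finset.mul_sum] at h2
  simp only [Finset.sum_const, Finset.card_range, smul_eq_mul] at h2
  omega

end Counting

end RWLaw

namespace RWLaw

/-! ### Zero speed when no cut times exist -/

section ZeroSpeed

variable {E : Type*} [Fintype E] [TopologicalSpace E] [DiscreteTopology E] [MeasurableSpace E]
  [BorelSpace E] {lev : E → ℝ} {Q : Measure (ℕ → E)}

/-- Scales `L i` growing so fast that a climb by `L (i + 1) - 1` is unlikely even when it is given
`4 * C * ∑ b ≤ B i, (#E)^b` attempts. -/
lemma Hyp.exists_scales (h : Hyp lev Q) (hq : Q (V0 lev) = 0) (C : ℕ) :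
    ∃ L B : ℕ → ℕ, L 0 = 1 ∧ StrictMono L ∧ (∀ i, B i = 2 ^ (i + 2) * C * L i) ∧
      ∀ i, ((4 * C : ℕ) : ℝ≥0∞) * ((∑ b ∈ Finset.range (B i + 1), (Fintype.card E : ℝ≥0∞) ^ b) *
        Q (Up lev (L (i + 1) - 1))) ≤ 64⁻¹ := by
  have hnext : ∀ i l : ℕ, ∃ a : ℕ, l ≤ a ∧ ((4 * C : ℕ) : ℝ≥0∞) *
      ((∑ b ∈ Finset.range (2 ^ (i + 2) * C * l + 1), (Fintype.card E : ℝ≥0∞) ^ b) *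
        Q (Up lev a)) ≤ 64⁻¹ := by
    intro i l
    set W : ℝ≥0∞ := ∑ b ∈ Finset.range (2 ^ (i + 2) * C * l + 1), (Fintype.card E : ℝ≥0∞) ^ b
      with hW
    have hWt : W ≠ ⊤ := by
      rw [hW]
      exact ENNReal.sum_ne_top.2 fun b _ => ENNReal.pow_ne_top (ENNReal.natCast_ne_top _)
    have h1 : Tendsto (fun a => ((4 * C : ℕ) : ℝ≥0∞) * (W * Q (Up lev a))) atTop (𝓝 0) := by
      have h2 := ENNReal.Tendsto.const_mul (a := ((4 * C : ℕ) : ℝ≥0∞))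
        (ENNReal.Tendsto.const_mul (a := W) (h.tendsto_Up hq) (Or.inr hWt))
        (Or.inr (ENNReal.natCast_ne_top _))
      simpa using h2
    have h3 := h1.eventually_le_const (show (0 : ℝ≥0∞) < 64⁻¹ by simp)
    obtain ⟨a, ha, hla⟩ := (h3.and (eventually_ge_atTop l)).exists
    exact ⟨a, hla, ha⟩
  choose nx hnx1 hnx2 using hnext
  set L : ℕ → ℕ := fun i => Nat.rec 1 (fun i l => nx i l + 1) i with hL
  have hLs : ∀ i, L (i + 1) = nx i (L i) + 1 := fun i => rfl
  refine ⟨L, fun i => 2 ^ (i + 2) * C * L i, rfl, strictMono_nat_of_lt_succ fun i => ?_,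
    fun i => rfl, fun i => ?_⟩
  · rw [hLs]; exact Nat.lt_succ_of_le (hnx1 _ _)
  · rw [hLs, Nat.add_sub_cancel]; exact hnx2 i (L i)

/-- The union of the escape events over the scales `i < m` at level `k`. -/
def EscAny (lev : E → ℝ) (m : ℕ) (L B : ℕ → ℕ) (k : ℕ) : Set (ℕ → E) :=
  {s | ∃ i < m, ∃ b ≤ B i, s ∈ Esc lev (k : ℝ) b (L (i + 1) - 1) (L m)}

/-- A union bound over the scales and over the values of `b`. -/
lemma Hyp.EscAny_le (h : Hyp lev Q) {C : ℕ} {L B : ℕ → ℕ} (hL : StrictMono L)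
    (hLB : ∀ i, ((4 * C : ℕ) : ℝ≥0∞) *
      ((∑ b ∈ Finset.range (B i + 1), (Fintype.card E : ℝ≥0∞) ^ b) *
        Q (Up lev (L (i + 1) - 1))) ≤ 64⁻¹) {k : ℕ} {p : List E}
    (hp : p ∈ minl (fun l => (k : ℝ) ≤ lvl lev l)) :
    Q (cyl p ∩ EscAny lev (4 * C) L B k) ≤ 64⁻¹ * Q (cyl p) := by
  rcases Nat.eq_zero_or_pos C with rfl | hC
  · simp [EscAny]
  have hm0 : ((4 * C : ℕ) : ℝ≥0∞) ≠ 0 := by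
    simp only [ne_eq, Nat.cast_eq_zero]; omega
  have hsub : cyl p ∩ EscAny lev (4 * C) L B k ⊆ ⋃ i ∈ Finset.range (4 * C),
      ⋃ b ∈ Finset.range (B i + 1),
        (cyl p ∩ Esc lev (k : ℝ) b ((L (i + 1) - 1 : ℕ) : ℝ) (L (4 * C))) := by
    rintro s ⟨hsp, i, hi, b, hb, hs⟩
    simp only [mem_iUnion, Finset.mem_range]
    refine ⟨i, hi, b, by omega, hsp, ?_⟩
    have : 1 ≤ L (i + 1) := by have := hL.le_apply (x := i + 1); omega
    rwa [Nat.cast_sub this, Nat.cast_one]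
  calc Q (cyl p ∩ EscAny lev (4 * C) L B k)
      ≤ ∑ i ∈ Finset.range (4 * C), ∑ b ∈ Finset.range (B i + 1),
          Q (cyl p ∩ Esc lev (k : ℝ) b ((L (i + 1) - 1 : ℕ) : ℝ) (L (4 * C))) :=
        (measure_mono hsub).trans ((measure_biUnion_finset_le _ _).trans
          (Finset.sum_le_sum fun i _ => measure_biUnion_finset_le _ _))
    _ ≤ ∑ i ∈ Finset.range (4 * C), ∑ b ∈ Finset.range (B i + 1),
          (Fintype.card E : ℝ≥0∞) ^ b * Q (Up lev (L (i + 1) - 1)) * Q (cyl p) :=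
        Finset.sum_le_sum fun i _ => Finset.sum_le_sum fun b _ => h.Esc_le hp b _ _
    _ = ∑ i ∈ Finset.range (4 * C), ((∑ b ∈ Finset.range (B i + 1), (Fintype.card E : ℝ≥0∞) ^ b) *
          Q (Up lev (L (i + 1) - 1))) * Q (cyl p) := by
        refine Finset.sum_congr rfl fun i _ => ?_
        rw [Finset.sum_mul, Finset.sum_mul]
    _ ≤ ∑ i ∈ Finset.range (4 * C), (((4 * C : ℕ) : ℝ≥0∞)⁻¹ * 64⁻¹) * Q (cyl p) := by
        refine Finset.sum_le_sum fun i _ => ?_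
        refine mul_le_mul' ?_ le_rfl
        rw [← ENNReal.mul_le_iff_le_inv hm0 (ENNReal.natCast_ne_top _)]
        exact hLB i
    _ = 64⁻¹ * Q (cyl p) := by
        rw [Finset.sum_const, Finset.card_range, nsmul_eq_mul, ← mul_assoc, ← mul_assoc,
          ENNReal.mul_inv_cancel hm0 (ENNReal.natCast_ne_top _), one_mul]

/-- Reaching level `M * I` by time `C * M * I` is exponentially unlikely in `I`. -/
lemma Hyp.fast_le (h : Hyp lev Q) {C : ℕ} (hC : 0 < C) {L B : ℕ → ℕ} (hL0 : L 0 = 1)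
    (hL : StrictMono L) (hB : ∀ i, B i = 2 ^ (i + 2) * C * L i)
    (hLB : ∀ i, ((4 * C : ℕ) : ℝ≥0∞) *
      ((∑ b ∈ Finset.range (B i + 1), (Fintype.card E : ℝ≥0∞) ^ b) *
        Q (Up lev (L (i + 1) - 1))) ≤ 64⁻¹) (I : ℕ) :
    Q {s | ∃ n ≤ C * (L (4 * C) * I), ((L (4 * C) * I : ℕ) : ℝ) ≤ lv lev s n} ≤
      L (4 * C) * 64 * 4⁻¹ ^ I := by
  have := h.prob
  set M := L (4 * C) with hM
  have hMpos : 0 < M := by have := hL.monotone (Nat.zero_le (4 * C)); omega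
  set Ev := EscAny lev (4 * C) L B with hEv
  set 𝒦 := (Finset.range I).powerset.filter fun K => I ≤ 2 * K.card + 2 with h𝒦
  have hsub : {s | ∃ n ≤ C * (M * I), ((M * I : ℕ) : ℝ) ≤ lv lev s n} ⊆
      ⋃ r ∈ Finset.range M, ⋃ K ∈ 𝒦, {s | ∀ i ∈ K, s ∈ Ev (r + M * i)} := by
    intro s hs
    have h1 := count_Esc h.step hC hL0 hL hB hs
    obtain ⟨r, hr, hI⟩ := exists_residue (I := I) hMpos (fun k => s ∈ Ev k) 
      (by convert h1; exact Iff.rfl)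
    simp only [mem_iUnion, Finset.mem_range, exists_prop]
    refine ⟨r, hr, (Finset.range I).filter fun i => s ∈ Ev (r + M * i),
      Finset.mem_filter.2 ⟨Finset.mem_powerset.2 (Finset.filter_subset _ _), hI⟩, fun i hi => ?_⟩
    exact (Finset.mem_filter.1 hi).2
  have h64 : ∀ K ∈ 𝒦, (64⁻¹ : ℝ≥0∞) ^ K.card ≤ 64 * 8⁻¹ ^ I := by
    intro K hK
    have hK' := (Finset.mem_filter.1 hK).2
    have e8 : (64 : ℝ≥0∞) * 8⁻¹ ^ 2 = 1 := by
      rw [← ENNReal.inv_pow]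
      norm_num
      exact ENNReal.mul_inv_cancel (by norm_num) (by norm_num)
    have e64 : (64⁻¹ : ℝ≥0∞) = 8⁻¹ ^ 2 := by rw [← ENNReal.inv_pow]; norm_num
    calc (64⁻¹ : ℝ≥0∞) ^ K.card = 64 * 8⁻¹ ^ 2 * (8⁻¹ ^ 2) ^ K.card := by rw [e8, one_mul, e64]
      _ = 64 * 8⁻¹ ^ (2 * K.card + 2) := by rw [mul_assoc, ← pow_mul, ← pow_add, add_comm 2]
      _ ≤ 64 * 8⁻¹ ^ I := by
          gcongr 64 * ?_
          exact pow_le_pow_of_le_one (zero_le) (by simp [ENNReal.inv_le_one]) hK'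
  have hspaced : ∀ (r : ℕ) (K : Finset ℕ), Q {s | ∀ i ∈ K, s ∈ Ev (r + M * i)} ≤ 64⁻¹ ^ K.card := by
    refine fun r K => prob_spaced_le (lev := lev) ?_ ?_ (fun k p hp => h.EscAny_le hL hLB hp) r K
    · rintro k s ⟨i, -, b, -, n, t, r, hn, -⟩
      exact ⟨n, hn⟩
    · rintro k k' s s' N ⟨i, hi, b, hb, hs⟩ hk hN hp
      exact ⟨i, hi, b, hb, Esc_congr hs (by exact_mod_cast hk) hN hp⟩
  have h24 : (2 : ℝ≥0∞) * 8⁻¹ = 4⁻¹ := by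
    rw [show (8 : ℝ≥0∞) = 2 * 4 by norm_num, ENNReal.mul_inv (by simp) (by simp), ← mul_assoc,
      ENNReal.mul_inv_cancel (by simp) (by simp), one_mul]
  calc Q {s | ∃ n ≤ C * (M * I), ((M * I : ℕ) : ℝ) ≤ lv lev s n}
      ≤ ∑ r ∈ Finset.range M, ∑ K ∈ 𝒦, Q {s | ∀ i ∈ K, s ∈ Ev (r + M * i)} :=
        (measure_mono hsub).trans ((measure_biUnion_finset_le _ _).trans
          (Finset.sum_le_sum fun r _ => measure_biUnion_finset_le _ _))
    _ ≤ ∑ r ∈ Finset.range M, ∑ K ∈ 𝒦, 64 * 8⁻¹ ^ I :=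
        Finset.sum_le_sum fun r _ => Finset.sum_le_sum fun K hK =>
          (hspaced r K).trans (h64 K hK)
    _ = M * (𝒦.card * (64 * 8⁻¹ ^ I)) := by simp
    _ ≤ M * ((2 : ℝ≥0∞) ^ I * (64 * 8⁻¹ ^ I)) := by
        gcongr
        have : 𝒦.card ≤ 2 ^ I := by
          refine (Finset.card_filter_le _ _).trans ?_
          rw [Finset.card_powerset, Finset.card_range]
        exact_mod_cast this
    _ = M * 64 * (2 * 8⁻¹) ^ I := by rw [mul_pow]; ring
    _ = M * 64 * 4⁻¹ ^ I := by rw [h24]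

/-- If cut times do not exist, the level grows sublinearly: apply Borel-Cantelli to `Hyp.fast_le`
with `C > 2 / δ`. -/
lemma Hyp.ae_slow (h : Hyp lev Q) (hq : Q (V0 lev) = 0) {δ : ℝ} (hδ : 0 < δ) :
    ∀ᵐ s ∂Q, ∀ᶠ n : ℕ in atTop, lv lev s n ≤ δ * n := by
  obtain ⟨C, hCδ⟩ := exists_nat_gt (2 / δ)
  have hC : 0 < C := by
    have : (0 : ℝ) < C := lt_of_le_of_lt (by positivity) hCδ
    exact_mod_cast this
  obtain ⟨L, B, hL0, hL, hB, hLB⟩ := h.exists_scales hq C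
  have hfast := h.fast_le hC hL0 hL hB hLB
  set M := L (4 * C) with hM
  have hMpos : 0 < M := by have := hL.monotone (Nat.zero_le (4 * C)); omega
  have hsum : ∑' I : ℕ, Q {s | ∃ n ≤ C * (M * I), ((M * I : ℕ) : ℝ) ≤ lv lev s n} ≠ ⊤ := by
    refine ne_top_of_le_ne_top ?_ (ENNReal.tsum_le_tsum hfast)
    rw [ENNReal.tsum_mul_left, ENNReal.tsum_geometric]
    refine ENNReal.mul_ne_top (ENNReal.mul_ne_top (ENNReal.natCast_ne_top _) (by simp)) ?_
    rw [ENNReal.inv_ne_top, ← pos_iff_ne_zero, tsub_pos_iff_lt]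
    exact ENNReal.inv_lt_one.2 (by norm_num)
  filter_upwards [ae_eventually_notMem hsum] with s hs
  obtain ⟨I0, hI0⟩ := eventually_atTop.1 hs
  have hM' : (0 : ℝ) < M := by exact_mod_cast hMpos
  obtain ⟨n0, hn0⟩ := exists_nat_ge ((M : ℝ) * (I0 + 1) / δ)
  filter_upwards [eventually_ge_atTop n0] with n hn
  by_contra hc
  push Not at hc
  rw [div_le_iff₀ hδ] at hn0
  have hn' : (n0 : ℝ) ≤ n := by exact_mod_cast hn
  have hSn : (M : ℝ) * (I0 + 1) < lv lev s n := by nlinarith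
  set I := ⌊lv lev s n / M⌋₊ with hI
  have hS0 : 0 ≤ lv lev s n / M := by
    have : 0 ≤ lv lev s n := le_trans (by positivity) hSn.le
    positivity
  have hI1 : (I : ℝ) * M ≤ lv lev s n := by
    rw [← le_div_iff₀ hM']; exact Nat.floor_le hS0
  have hI2 : lv lev s n < (I + 1) * M := by
    rw [← div_lt_iff₀ hM']; exact Nat.lt_floor_add_one _
  have hI3 : I0 + 1 ≤ I := by
    refine Nat.le_floor ?_
    rw [le_div_iff₀ hM']
    push_cast
    linarith
  refine hI0 I (by omega) ⟨n, ?_, ?_⟩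
  · have h1 : (1 : ℝ) ≤ I := by exact_mod_cast (by omega : 1 ≤ I)
    have h2 : δ * n < 2 * (M * I) := by nlinarith
    have h3 : (2 : ℝ) < C * δ := by rwa [div_lt_iff₀ hδ] at hCδ
    have h4 : (0 : ℝ) < M * I := by positivity
    have h5 : δ * n < δ * (C * (M * I)) := by nlinarith
    have h6 : (n : ℝ) < C * (M * I) := lt_of_mul_lt_mul_left h5 hδ.le
    have h7 : n < C * (M * I) := by exact_mod_cast h6
    exact h7.le
  · push_cast; linarith

/-- The law of large numbers in the direction measured by `lev`. -/
theorem Hyp.oneSided (h : Hyp lev Q) : OneSided lev Q := by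
  by_cases hq : Q (V0 lev) = 0
  swap
  · exact h.oneSided_of_ne hq
  refine ⟨0, ?_⟩
  have hall : ∀ᵐ s ∂Q, ∀ j : ℕ, ∀ᶠ n : ℕ in atTop, lv lev s n ≤ (1 / ((j : ℝ) + 1)) * n :=
    ae_all_iff.2 fun j => h.ae_slow hq (by positivity)
  filter_upwards [hall] with s hs
  have hδ : ∀ δ : ℝ, 0 < δ → ∀ᶠ n : ℕ in atTop, lv lev s n ≤ δ * n := by
    intro δ hδ
    obtain ⟨j, hj⟩ := exists_nat_one_div_lt hδ
    filter_upwards [hs j] with n hn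
    refine hn.trans ?_
    gcongr
  refine ⟨fun ht => ?_, fun _ => hδ⟩
  rw [Metric.tendsto_atTop']
  intro ε hε
  obtain ⟨N, hN⟩ := eventually_atTop.1 ((hδ (ε / 2) (by positivity)).and
    ((ht.eventually_ge_atTop 0).and (eventually_gt_atTop 0)))
  refine ⟨N, fun n hn => ?_⟩
  obtain ⟨h1, h2, h3⟩ := hN n hn.le
  have h3' : (0 : ℝ) < n := by exact_mod_cast h3
  rw [dist_zero_right, Real.norm_eq_abs, abs_of_nonneg (by positivity), div_lt_iff₀ h3']
  nlinarith

end ZeroSpeed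

end RWLaw

namespace RWLaw

/-! ### Weights of finite paths -/

section Weights

variable {E : Type*} {G : Type*} [AddCommGroup G] (st : E → G)

/-- The site reached from `x` after performing the steps in `l`. -/
def endp (x : G) (l : List E) : G := x + (l.map st).sum

/-- The product of the transition weights `p` along the path that starts at `x` and has
steps `l`. -/
noncomputable def wt (p : G → E → ℝ≥0∞) : G → List E → ℝ≥0∞
  | _, [] => 1
  | x, e :: l => p x e * wt p (x + st e) l

open scoped Classical in
/-- The weights `p` on the set `A`, and the constant weight `c` outside `A`. -/
noncomputable def msk (A : Set G) (c : ℝ≥0∞) (p : G → E → ℝ≥0∞) : G → E → ℝ≥0∞ :=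
  fun x e => if x ∈ A then p x e else c

@[simp] lemma endp_nil (x : G) : endp st x [] = x := by simp [endp]

lemma endp_cons (x : G) (e : E) (l : List E) : endp st x (e :: l) = endp st (x + st e) l := by
  simp [endp, add_assoc]

lemma endp_append (x : G) (l m : List E) : endp st x (l ++ m) = endp st (endp st x l) m := by
  simp [endp, add_assoc]

lemma wt_append (p : G → E → ℝ≥0∞) (x : G) (l m : List E) :
    wt st p x (l ++ m) = wt st p x l * wt st p (endp st x l) m := by
  induction l generalizing x with
  | nil => simp [wt]
  | cons e l ih => simp only [List.cons_append, wt, ih, endp_cons, mul_assoc]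

lemma wt_mono {p p' : G → E → ℝ≥0∞} (h : ∀ x e, p x e ≤ p' x e) (x : G) (l : List E) :
    wt st p x l ≤ wt st p' x l := by
  induction l generalizing x with
  | nil => simp [wt]
  | cons e l ih => exact mul_le_mul' (h _ _) (ih _)

lemma wt_congr {p p' : G → E → ℝ≥0∞} {x : G} {l : List E}
    (h : ∀ j < l.length, p (endp st x (l.take j)) = p' (endp st x (l.take j))) :
    wt st p x l = wt st p' x l := by
  induction l generalizing x with
  | nil => simp [wt]
  | cons e l ih =>
    simp only [wt]
    have h0 := h 0 (by simp)
    simp only [List.take_zero, endp_nil] at h0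
    rw [h0, ih]
    intro j hj
    have := h (j + 1) (by simpa using hj)
    simpa [endp_cons] using this

lemma wt_msk_of_mem {A : Set G} {c : ℝ≥0∞} {p : G → E → ℝ≥0∞} {x : G} {l : List E}
    (h : ∀ j < l.length, endp st x (l.take j) ∈ A) :
    wt st (msk A c p) x l = wt st p x l :=
  wt_congr st fun j hj => by funext e; simp [msk, h j hj]

/-- Replacing the weight `1` outside `A` by `c` multiplies the weight of a path by one factor `c`
for each step taken outside `A`. -/
lemma wt_msk_mul (A : Set G) (c : ℝ≥0∞) (p : G → E → ℝ≥0∞) (x : G) (l : List E) :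
    wt st (msk A c p) x l =
      c ^ (∑ j ∈ Finset.range l.length, if endp st x (l.take j) ∈ A then 0 else 1) *
        wt st (msk A 1 p) x l := by
  induction l generalizing x with
  | nil => simp [wt]
  | cons e l ih =>
    simp only [wt, ih, List.length_cons, Finset.sum_range_succ', List.take_succ_cons, endp_cons,
      List.take_zero, endp_nil]
    by_cases hx : x ∈ A
    · simp only [msk, hx, if_true, add_zero]; ring
    · simp only [msk, hx, if_false, pow_add, pow_one, one_mul]; ring

lemma wt_measurable {Ω : Type*} [MeasurableSpace Ω] {p : Ω → G → E → ℝ≥0∞}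
    (hp : ∀ x e, Measurable fun ω => p ω x e) (x : G) (l : List E) :
    Measurable fun ω => wt st (p ω) x l := by
  induction l generalizing x with
  | nil => simp only [wt]; exact measurable_const
  | cons e l ih => simp only [wt]; exact (hp x e).mul (ih _)

lemma Mid_prefixFree (lev : E → ℝ) (k : ℝ) (b : ℕ) (p : List E) :
    PrefixFree (Mid lev k b p) := by
  rintro l ⟨hl, hlb⟩ m ⟨-, hmb⟩ ⟨t, rfl⟩
  rcases t with _ | ⟨e, t⟩
  · simp
  exfalso
  -- The step that leaves the end of `l` is one more step from a level at least `k`.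
  have h1 : upc lev (k - lvl lev p) l + 1 ≤ upc lev (k - lvl lev p) (l ++ e :: t) := by
    have hlen : l.length + 1 ≤ (l ++ e :: t).length := by simp
    rw [upc, upc]
    refine le_trans (le_of_eq ?_) (Finset.sum_le_sum_of_subset (Finset.range_mono hlen))
    rw [Finset.sum_range_succ]
    congr 1
    · refine Finset.sum_congr rfl fun j hj => ?_
      rw [List.take_append_of_le_length (Finset.mem_range.1 hj).le]
    · rw [List.take_append_of_le_length le_rfl, List.take_length, if_pos (by linarith)]
  omega

variable [Fintype E]

/-- Kraft's inequality for sub-Markovian weights. -/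
lemma kraft {p : G → E → ℝ≥0∞} (hp : ∀ x, ∑ e, p x e ≤ 1) {F : Set (List E)} (hF : PrefixFree F)
    (x : G) : ∑' l : F, wt st p x l ≤ 1 := by
  have key : ∀ n : ℕ, ∀ (F : Finset (List E)) (x : G), (∀ l ∈ F, l.length < n) →
      PrefixFree (F : Set (List E)) → ∑ l ∈ F, wt st p x l ≤ 1 := by
    intro n
    induction n with
    | zero =>
      intro F x h _
      have : F = ∅ := Finset.eq_empty_of_forall_notMem fun l hl => absurd (h l hl) (by omega)
      simp [this]
    | succ n ih =>
      intro F x h hF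
      by_cases hnil : [] ∈ F
      · have : F = {[]} := by
          ext l
          rw [Finset.mem_singleton]
          refine ⟨fun hl => (hF [] hnil l hl l.nil_prefix).symm, ?_⟩
          rintro rfl; exact hnil
        simp [this, wt]
      · set Fe : E → Finset (List E) := fun e =>
          F.preimage (List.cons e) (List.cons_injective.injOn) with hFe
        have hsum : ∑ l ∈ F, wt st p x l =
            ∑ e, ∑ l ∈ Fe e, wt st p x (e :: l) := by
          rw [Finset.sum_sigma']
          symm
          refine Finset.sum_bij (fun a _ => a.1 :: a.2) ?_ ?_ ?_ ?_
          · rintro ⟨e, l⟩ ha; simpa [hFe] using ha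
          · rintro ⟨e, l⟩ _ ⟨e', l'⟩ _ hab
            simp only [List.cons.injEq] at hab
            obtain ⟨rfl, rfl⟩ := hab
            rfl
          · intro l hl
            cases l with
            | nil => exact absurd hl hnil
            | cons e l => exact ⟨⟨e, l⟩, by simpa [hFe] using hl, rfl⟩
          · rintro ⟨e, l⟩ _; rfl
        rw [hsum]
        refine le_trans (Finset.sum_le_sum fun e _ => ?_) (hp x)
        simp only [wt, ← Finset.mul_sum]
        refine mul_le_of_le_one_right' (ih _ _ ?_ ?_)
        · intro l hl
          have := h _ (Finset.mem_preimage.1 hl)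
          simpa using this
        · intro l hl m hm hlm
          have := hF (e :: l) (Finset.mem_preimage.1 hl) (e :: m) (Finset.mem_preimage.1 hm)
            (by simpa using hlm)
          simpa using this
  rw [ENNReal.tsum_eq_iSup_sum]
  refine iSup_le fun K => ?_
  have h1 : ∑ l ∈ K, wt st p x (l : List E) =
      ∑ l ∈ K.map (Function.Embedding.subtype _), wt st p x l := by simp
  rw [h1]
  refine key ((K.map (Function.Embedding.subtype (· ∈ F))).sup List.length + 1) _ x
    (fun l hl => Nat.lt_succ_of_le (Finset.le_sup (f := List.length) hl)) (hF.mono ?_)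
  intro l hl
  simp only [Finset.coe_map, Function.Embedding.subtype_apply, mem_image, Finset.mem_coe] at hl
  obtain ⟨a, _, rfl⟩ := hl
  exact a.2

/-- Kraft's inequality for the continuations in `Mid`, when the sites at height at least `k` have
weight `1` for every step: after normalisation by `(#E)⁻¹` per such step the weights are
sub-Markovian. -/
lemma tsum_Mid_le [Nonempty E] {lev : E → ℝ} {ht : G → ℝ} (hht : ∀ x l,
    ht (endp st x l) = ht x + lvl lev l) {q : G → E → ℝ≥0∞} (hq : ∀ x, ∑ e, q x e ≤ 1)
    (k : ℝ) (b : ℕ) (p : List E) {x : G} (hx : ht x = lvl lev p) :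
    ∑' m : Mid lev k b p, wt st (msk {z | ht z < k} 1 q) x m ≤ (Fintype.card E : ℝ≥0∞) ^ b := by
  set c : ℝ≥0∞ := (Fintype.card E : ℝ≥0∞)⁻¹ with hc
  have hc0 : (Fintype.card E : ℝ≥0∞) ≠ 0 := by simp
  have hct : (Fintype.card E : ℝ≥0∞) ≠ ⊤ := ENNReal.natCast_ne_top _
  have h1 : ∀ m : Mid lev k b p, wt st (msk {z | ht z < k} 1 q) x m =
      (Fintype.card E : ℝ≥0∞) ^ b * wt st (msk {z | ht z < k} c q) x m := by
    rintro ⟨m, -, hm⟩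
    have hcount : (∑ j ∈ Finset.range m.length,
        if endp st x (m.take j) ∈ {z | ht z < k} then 0 else 1) = b := by
      rw [← hm, upc]
      refine Finset.sum_congr rfl fun j _ => ?_
      by_cases h : k - lvl lev p ≤ lvl lev (m.take j)
      · rw [if_pos h, if_neg]
        rw [Set.mem_ofPred_eq, hht, hx, not_lt]; linarith
      · rw [if_neg h, if_pos]
        rw [Set.mem_ofPred_eq, hht, hx]; push Not at h; linarith
    simp only [wt_msk_mul st _ c]
    rw [hcount, ← mul_assoc, ← mul_pow, hc, ENNReal.mul_inv_cancel hc0 hct, one_pow, one_mul]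
  rw [tsum_congr h1, ENNReal.tsum_mul_left]
  refine mul_le_of_le_one_right' (kraft st (fun z => ?_) (Mid_prefixFree lev k b p) x)
  by_cases hz : z ∈ {z | ht z < k}
  · simpa only [msk, hz, if_true] using hq z
  · simp only [msk, hz, if_false, Finset.sum_const, Finset.card_univ, nsmul_eq_mul, hc]
    exact (ENNReal.mul_inv_cancel hc0 hct).le

end Weights

end RWLaw

namespace RWLaw

open ProbabilityTheory

/-! ### Averaging path weights over an i.i.d. environment -/

section Environment

variable {E : Type*} {G : Type*} [AddCommGroup G] (st : E → G) {Γ : Type*} [MeasurableSpace Γ]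
  {r : Γ → E → ℝ≥0∞} (μ : Measure Γ) [IsProbabilityMeasure μ]

/-- The annealed weight of a path does not depend on its starting point. -/
lemma lintegral_wt_shift (hr : ∀ e, Measurable fun g => r g e) (x : G) (l : List E) :
    ∫⁻ ω, wt st (fun z => r (ω z)) x l ∂(Measure.infinitePi fun _ : G => μ) =
      ∫⁻ ω, wt st (fun z => r (ω z)) 0 l ∂(Measure.infinitePi fun _ : G => μ) := by
  have hm : ∀ y : G, Measurable fun ω : G → Γ => wt st (fun z => r (ω z)) y l := fun y =>
    wt_measurable st (fun z e => (hr e).comp (measurable_pi_apply z)) y l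
  have hτ : Measurable fun (ω : G → Γ) (z : G) => ω (x + z) :=
    measurable_pi_lambda _ fun z => measurable_pi_apply _
  have hmap : (Measure.infinitePi fun _ : G => μ).map (fun ω z => ω (x + z)) =
      Measure.infinitePi fun _ : G => μ := by
    refine Measure.eq_infinitePi _ fun s t ht => ?_
    rw [Measure.map_apply hτ (MeasurableSet.pi s.countable_toSet fun i _ => ht i)]
    have h1 : (fun (ω : G → Γ) (z : G) => ω (x + z)) ⁻¹' (Set.pi s t) =
        Set.pi (s.map (addLeftEmbedding x)) (fun z => t (-x + z)) := by
      ext ω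
      simp only [Set.mem_preimage, Set.mem_pi, Finset.coe_map, addLeftEmbedding_apply,
        Set.forall_mem_image, neg_add_cancel_left]
    rw [h1, Measure.infinitePi_pi _ (fun i _ => ht _)]
    simp
  have hwt : ∀ (ω : G → Γ) (y : G), wt st (fun z => r (ω z)) (x + y) l =
      wt st (fun z => r (ω (x + z))) y l := by
    intro ω
    clear hm
    induction l with
    | nil => intro y; simp [wt]
    | cons e l ih =>
      intro y
      simp only [wt, add_assoc, ih]
  rw [← hmap, lintegral_map (hm 0) hτ, hmap]
  refine lintegral_congr fun ω => ?_
  rw [← hwt ω 0, add_zero]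

/-- Paths that use the environment on disjoint sets of sites have independent weights. -/
lemma lintegral_wt_mul (hr : ∀ e, Measurable fun g => r g e) (A : Set G) (x y : G)
    (l m : List E) :
    ∫⁻ ω, wt st (msk A 1 fun z => r (ω z)) x l * wt st (msk Aᶜ 1 fun z => r (ω z)) y m
        ∂(Measure.infinitePi fun _ : G => μ) =
      (∫⁻ ω, wt st (msk A 1 fun z => r (ω z)) x l ∂(Measure.infinitePi fun _ : G => μ)) *
        ∫⁻ ω, wt st (msk Aᶜ 1 fun z => r (ω z)) y m ∂(Measure.infinitePi fun _ : G => μ) := by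
  set σ : G → MeasurableSpace (G → Γ) := fun z => MeasurableSpace.comap (fun ω => ω z) inferInstance
    with hσ
  have hle : ∀ z, σ z ≤ MeasurableSpace.pi := fun z => (measurable_pi_apply z).comap_le
  have hind : iIndep σ (Measure.infinitePi fun _ : G => μ) :=
    iIndepFun_infinitePi (P := fun _ : G => μ) (X := fun _ => id) fun _ => measurable_id
  have hmeas : ∀ (A : Set G) (x : G) (l : List E), Measurable[⨆ z ∈ A, σ z]
      fun ω => wt st (msk A 1 fun z => r (ω z)) x l := by
    intro A x l
    refine @wt_measurable E G _ st (G → Γ) (⨆ z ∈ A, σ z) _ (fun z e => ?_) x l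
    by_cases hz : z ∈ A
    · simp only [msk, hz, if_true]
      refine Measurable.mono (ma := σ z) ?_ (le_biSup σ hz) le_rfl
      exact (hr e).comp (comap_measurable _)
    · simp only [msk, hz, if_false]
      exact measurable_const
  exact lintegral_mul_eq_lintegral_mul_lintegral_of_independent_measurableSpace
    (iSup₂_le fun z _ => hle z) (iSup₂_le fun z _ => hle z)
    (indep_iSup_of_disjoint hle hind disjoint_compl_right) (hmeas A x l) (hmeas Aᶜ y m)

variable [Fintype E] [TopologicalSpace E] [DiscreteTopology E] [MeasurableSpace E]
  [BorelSpace E]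

/-- The annealed law of the steps of a random walk in an i.i.d. environment satisfies `Hyp`, for
the height given by any additive function `ht` with increments at most `1`. -/
theorem Hyp.of_env [Nonempty E] (hr : ∀ e, Measurable fun g => r g e) (hr1 : ∀ g, ∑ e, r g e ≤ 1)
    {Q : Measure (ℕ → E)} [IsProbabilityMeasure Q]
    (hQ : ∀ l, Q (cyl l) =
      ∫⁻ ω, wt st (fun z => r (ω z)) 0 l ∂(Measure.infinitePi fun _ : G => μ))
    (ht : G →+ ℝ) {lev : E → ℝ} (hlev : ∀ e, lev e = ht (st e)) (hstep : ∀ e, |lev e| ≤ 1) :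
    Hyp lev Q := by
  have hht : ∀ x l, ht (endp st x l) = ht x + lvl lev l := by
    intro x l
    rw [endp, map_add, map_list_sum, lvl, List.map_map]
    congr 3
    funext e
    exact (hlev e).symm
  have hm : ∀ (A : Set G) (y : G) l, Measurable fun ω : G → Γ =>
      wt st (msk A 1 fun z => r (ω z)) y l := by
    intro A y l
    refine wt_measurable st (fun z e => ?_) y l
    by_cases hz : z ∈ A
    · simp only [msk, hz, if_true]; exact (hr e).comp (measurable_pi_apply z)
    · simp only [msk, hz, if_false]; exact measurable_const
  -- A path that stays at or above its starting level only uses sites outside `{ht < k}`.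
  have hNN : ∀ (p : G → E → ℝ≥0∞) (x : G) (k : ℝ) (m : List E), NN lev m → k ≤ ht x →
      wt st p x m = wt st (msk {z | ht z < k}ᶜ 1 p) x m := by
    intro p x k m hm hk
    refine (wt_msk_of_mem st fun j hj => ?_).symm
    rw [Set.mem_compl_iff, Set.mem_ofPred_eq, hht, not_lt]
    linarith [hm j hj.le]
  have hNN' : ∀ (x : G) (k : ℝ) (m : List E), NN lev m → k ≤ ht x →
      ∫⁻ ω, wt st (msk {z | ht z < k}ᶜ 1 fun z => r (ω z)) x m
        ∂(Measure.infinitePi fun _ : G => μ) = Q (cyl m) := by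
    intro x k m hm hk
    rw [hQ, ← lintegral_wt_shift st μ hr x]
    exact lintegral_congr fun ω => (hNN _ x k m hm hk).symm
  refine ⟨inferInstance, hstep, fun l m hl hm' => ?_, fun k p hp b S hS => ?_⟩
  · have hx : ht (endp st 0 l) = lvl lev l := by simp [hht]
    have hRec : ∀ ω : G → Γ, wt st (fun z => r (ω z)) 0 l =
        wt st (msk {z | ht z < lvl lev l} 1 fun z => r (ω z)) 0 l := by
      intro ω
      refine (wt_msk_of_mem st fun j hj => ?_).symm
      rw [Set.mem_ofPred_eq, hht, map_zero, zero_add]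
      exact hl j hj
    rw [hQ (l ++ m), ← hNN' _ _ m hm' hx.ge, hQ l]
    simp only [wt_append]
    rw [lintegral_congr fun ω => by rw [hRec ω, hNN _ _ _ m hm' hx.ge],
      lintegral_wt_mul st μ hr, lintegral_congr fun ω => hRec ω]
  · have hx : ht (endp st 0 p) = lvl lev p := by simp [hht]
    have hp' : ∀ ω : G → Γ, wt st (msk {z | ht z < k} 1 fun z => r (ω z)) 0 p =
        wt st (fun z => r (ω z)) 0 p := by
      intro ω
      refine wt_msk_of_mem st fun j hj => ?_
      rw [Set.mem_ofPred_eq, hht, map_zero, zero_add]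
      exact not_le.1 (hp.2 j hj)
    have h1 : ∀ (m : Mid lev k b p) (g : S), Q (cyl (p ++ m ++ g)) ≤
        (∫⁻ ω, wt st (msk {z | ht z < k} 1 fun z => r (ω z)) 0 (p ++ m)
          ∂(Measure.infinitePi fun _ : G => μ)) * Q (cyl (g : List E)) := by
      intro m g
      have hk : k ≤ ht (endp st 0 (p ++ m)) := by
        rw [endp_append, hht, hx]; exact m.2.1
      rw [← hNN' _ _ _ (hS g g.2) hk, ← lintegral_wt_mul st μ hr, hQ]
      refine lintegral_mono fun ω => ?_
      simp only
      rw [wt_append st _ _ (p ++ (m : List E)), hNN _ _ _ _ (hS g g.2) hk]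
      refine mul_le_mul' ?_ le_rfl
      -- Raising the weights at height at least `k` to `1` decouples this part of the path.
      refine wt_mono st (fun z e => ?_) _ _
      by_cases hz : z ∈ {z | ht z < k}
      · simp only [msk, hz, if_true]; exact le_rfl
      · simp only [msk, hz, if_false]
        exact (Finset.single_le_sum (f := r (ω z)) (fun _ _ => zero_le) (Finset.mem_univ e)).trans
          (hr1 _)
    calc ∑' m : Mid lev k b p, ∑' g : S, Q (cyl (p ++ m ++ g))
        ≤ ∑' m : Mid lev k b p, ∑' g : S,
          (∫⁻ ω, wt st (msk {z | ht z < k} 1 fun z => r (ω z)) 0 (p ++ m)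
            ∂(Measure.infinitePi fun _ : G => μ)) * Q (cyl (g : List E)) :=
          ENNReal.tsum_le_tsum fun m => ENNReal.tsum_le_tsum fun g => h1 m g
      _ = (∑' m : Mid lev k b p, ∫⁻ ω, wt st (msk {z | ht z < k} 1 fun z => r (ω z)) 0 (p ++ m)
            ∂(Measure.infinitePi fun _ : G => μ)) * ∑' g : S, Q (cyl (g : List E)) := by
          simp only [ENNReal.tsum_mul_left, ENNReal.tsum_mul_right]
      _ ≤ (Fintype.card E : ℝ≥0∞) ^ b * Q (cyl p) * ∑' g : S, Q (cyl (g : List E)) := by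
          refine mul_le_mul' ?_ le_rfl
          rw [← lintegral_tsum fun m => (hm _ _ _).aemeasurable, hQ p,
            ← lintegral_const_mul' _ _ (ENNReal.pow_ne_top (ENNReal.natCast_ne_top _))]
          refine lintegral_mono fun ω => ?_
          simp only [wt_append, hp', ENNReal.tsum_mul_left]
          rw [mul_comm]
          refine mul_le_mul' (tsum_Mid_le st hht (fun z => hr1 _) k b p hx) le_rfl

end Environment

end RWLaw

namespace RWLaw

/-! ### The random walk in random environment -/

section Walk

variable {d : ℕ}

/-- The transition probabilities of an element of `𝒫`, indexed by the unit steps. -/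
def stepProb (g : EnvDist d) (e : Fin d × Bool) : ℝ≥0∞ := ENNReal.ofReal (g.prob (stepVec d e))

/-- The sequence of steps of a path; increments that are not unit vectors get an arbitrary
value. -/
noncomputable def steps [Nonempty (Fin d × Bool)] (q : RWSpace d) (n : ℕ) : Fin d × Bool :=
  Function.invFun (stepVec d) (q.2 (n + 1) - q.2 n)

/-- The path starts at the origin and moves by unit steps. -/
def Good (q : RWSpace d) : Prop :=
  q.2 0 = 0 ∧ ∀ n, ∃ e, q.2 (n + 1) - q.2 n = stepVec d e

lemma stepVec_injective : Function.Injective (stepVec d) := by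
  rintro ⟨i, b⟩ ⟨j, c⟩ h
  have h1 := congrFun h i
  by_cases hij : i = j
  · subst hij
    cases b <;> cases c <;> simp [stepVec] at h1 ⊢
  · cases b <;> cases c <;> simp [stepVec, hij] at h1

lemma measurable_prob (v : Site d) : Measurable fun g : EnvDist d => g.prob v :=
  (measurable_pi_apply v).comp (comap_measurable EnvDist.prob)

lemma measurable_stepProb (e : Fin d × Bool) : Measurable fun g : EnvDist d => stepProb g e :=
  (measurable_prob _).ennreal_ofReal

lemma sum_stepProb (g : EnvDist d) : ∑ e, stepProb g e = 1 := by
  simp only [stepProb]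
  rw [← ENNReal.ofReal_sum_of_nonneg fun _ _ => g.nonneg _, g.total, ENNReal.ofReal_one]

lemma wt_le_one (ω : EnvOmega d) (x : Site d) (l : List (Fin d × Bool)) :
    wt (stepVec d) (fun z => stepProb (ω z)) x l ≤ 1 := by
  induction l generalizing x with
  | nil => simp [wt]
  | cons e l ih =>
    refine mul_le_one' ?_ (ih _)
    rw [← sum_stepProb (ω x)]
    exact Finset.single_le_sum (f := stepProb (ω x)) (fun _ _ => zero_le) (Finset.mem_univ e)

lemma ofReal_pathWeight (ω : EnvOmega d) (x : Site d) (l : List (Fin d × Bool)) :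
    ENNReal.ofReal (pathWeight ω l.length fun k => endp (stepVec d) x (l.take k)) =
      wt (stepVec d) (fun z => stepProb (ω z)) x l := by
  induction l generalizing x with
  | nil => simp [wt, pathWeight]
  | cons e l ih =>
    simp only [wt, ← ih, pathWeight, List.length_cons, Finset.prod_range_succ']
    rw [ENNReal.ofReal_mul (Finset.prod_nonneg fun _ _ => (ω _).nonneg _), mul_comm]
    simp [endp_cons, stepProb]

lemma iid_eq {μ : Measure (EnvDist d)} {ν : Measure (EnvOmega d)} (h : IsIIDEnv μ ν) :
    have := h.1
    ν = Measure.infinitePi fun _ : Site d => μ := by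
  intro _
  exact Measure.eq_infinitePi _ fun s t ht => by
    rw [← h.2.2 s t fun x _ => ht x]; rfl

variable {μ : Measure (EnvDist d)} {P : Measure (RWSpace d)}

lemma measurable_pathWeight (n : ℕ) (x : ℕ → Site d) :
    Measurable fun ω : EnvOmega d => pathWeight ω n x :=
  Finset.measurable_prod _ fun _ _ => (measurable_prob _).comp (measurable_pi_apply _)

lemma IsRWRE.cyl_eq (hP : IsRWRE μ P) (n : ℕ) (x : ℕ → Site d) :
    (P {q | ∀ k ≤ n, q.2 k = x k}).toReal =
      (if x 0 = 0 then (1 : ℝ) else 0) * ∫ ω, pathWeight ω n x ∂(P.map Prod.fst) := by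
  simpa using hP.2.2 n x univ MeasurableSet.univ

/-- Paths that do not start at the origin or contain a forbidden step are covered by countably many
cylinders of weight zero. -/
lemma IsRWRE.ae_good (hP : IsRWRE μ P) : ∀ᵐ q ∂P, Good q := by
  have := hP.1
  have hnull : ∀ (n : ℕ) (x : ℕ → Site d),
      (if x 0 = 0 then (1 : ℝ) else 0) * ∫ ω, pathWeight ω n x ∂(P.map Prod.fst) = 0 →
      ∀ᵐ q ∂P, ¬ ∀ k ≤ n, q.2 k = x k := by
    intro n x hx
    rw [← IsRWRE.cyl_eq hP, ENNReal.toReal_eq_zero_iff] at hx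
    rw [ae_iff]
    simpa using hx.resolve_right (measure_ne_top _ _)
  have h0 : ∀ᵐ q ∂P, ∀ v : Site d, v ≠ 0 → q.2 0 ≠ v := by
    rw [ae_all_iff]
    intro v
    by_cases hv : v = 0
    · simp [hv]
    · filter_upwards [hnull 0 (fun _ => v) (by simp [hv])] with q hq _ h
      exact hq fun k hk => by rw [Nat.le_zero.1 hk]; exact h
  have h1 : ∀ᵐ q ∂P, ∀ (n : ℕ) (y : Fin (n + 2) → Site d),
      (∀ e, y (Fin.last (n + 1)) - y (Fin.last n).castSucc ≠ stepVec d e) →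
      ¬ ∀ k, ∀ hk : k < n + 2, q.2 k = y ⟨k, hk⟩ := by
    simp only [ae_all_iff]
    intro n y hy
    set x : ℕ → Site d := fun k => if hk : k < n + 2 then y ⟨k, hk⟩ else 0 with hx
    have hw : ∀ ω : EnvOmega d, pathWeight ω (n + 1) x = 0 := by
      intro ω
      refine Finset.prod_eq_zero (Finset.self_mem_range_succ n) ?_
      by_contra hne
      obtain ⟨e, he⟩ := (ω (x n)).support _ hne
      refine hy e ?_
      rw [← he]
      simp only [hx, show n + 1 < n + 2 by omega, show n < n + 2 by omega, dif_pos]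
      rfl
    filter_upwards [hnull (n + 1) x (by simp [hw])] with q hq h
    refine hq fun k hk => ?_
    have hk' : k < n + 2 := by omega
    simp only [hx, hk', dif_pos]
    exact h k hk'
  filter_upwards [h0, h1] with q hq0 hq1
  refine ⟨by_contra fun h => hq0 _ h rfl, fun n => ?_⟩
  by_contra hc
  push Not at hc
  exact hq1 n (fun k => q.2 k) hc fun k hk => rfl

variable [Nonempty (Fin d × Bool)]

lemma measurable_steps : Measurable (steps : RWSpace d → ℕ → Fin d × Bool) := by
  refine measurable_pi_lambda _ fun n => ?_
  have h : Measurable fun q : RWSpace d => q.2 (n + 1) - q.2 n :=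
    ((measurable_pi_apply (n + 1)).comp measurable_snd).sub
      ((measurable_pi_apply n).comp measurable_snd)
  exact (measurable_of_countable (Function.invFun (stepVec d))).comp h

lemma Good.eq_endp {q : RWSpace d} (h : Good q) (n : ℕ) :
    q.2 n = endp (stepVec d) 0 (pre (steps q) n) := by
  induction n with
  | zero => simp [h.1]
  | succ n ih =>
    obtain ⟨e, he⟩ := h.2 n
    have hs : steps q n = e := by
      rw [steps, he, Function.leftInverse_invFun stepVec_injective]
    rw [pre_add, endp_append, ← ih]
    simp [pre, shf, endp, hs, ← he]

lemma steps_mem_cyl {q : RWSpace d} (h : Good q) (l : List (Fin d × Bool)) :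
    steps q ∈ cyl l ↔ ∀ k ≤ l.length, q.2 k = endp (stepVec d) 0 (l.take k) := by
  refine ⟨fun hq k hk => ?_, fun hq => ?_⟩
  · rw [h.eq_endp, mem_cyl_take hq hk]
  · refine List.ext_getElem (by simp) fun i hi hi' => ?_
    have h1 : q.2 (i + 1) - q.2 i = stepVec d l[i] := by
      rw [hq i hi'.le, hq (i + 1) hi', List.take_add_one, endp_append]
      simp [endp, List.getElem?_eq_getElem hi']
    simp only [pre, List.getElem_map, List.getElem_range, steps]
    rw [h1, Function.leftInverse_invFun stepVec_injective]

/-- The annealed probability of a finite sequence of steps is its averaged quenched weight. -/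
lemma IsRWRE.map_cyl (hP : IsRWRE μ P) (l : List (Fin d × Bool)) :
    P.map steps (cyl l) =
      ∫⁻ ω, wt (stepVec d) (fun z => stepProb (ω z)) 0 l ∂(P.map Prod.fst) := by
  have := hP.1
  have : IsProbabilityMeasure (P.map Prod.fst) := hP.2.1.2.1
  set x : ℕ → Site d := fun k => endp (stepVec d) 0 (l.take k) with hx
  have h1 : P.map steps (cyl l) = P {q | ∀ k ≤ l.length, q.2 k = x k} := by
    rw [Measure.map_apply measurable_steps (measurableSet_cyl l)]
    refine measure_congr ?_
    filter_upwards [IsRWRE.ae_good hP] with q hq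
    exact propext (steps_mem_cyl hq l)
  have h2 := IsRWRE.cyl_eq hP l.length x
  rw [if_pos (by simp [hx]), one_mul, integral_eq_lintegral_of_nonneg_ae
    (f := fun ω : EnvOmega d => pathWeight ω l.length x) (Eventually.of_forall fun ω => Finset.prod_nonneg fun _ _ => (ω _).nonneg _)
    (measurable_pathWeight _ _).aestronglyMeasurable] at h2
  simp only [hx, ofReal_pathWeight] at h2
  rw [h1]
  refine (ENNReal.toReal_eq_toReal_iff' (measure_ne_top _ _) ?_).1 h2
  refine ne_top_of_le_ne_top ENNReal.one_ne_top
    ((lintegral_mono fun ω => wt_le_one ω 0 l).trans ?_)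
  simp

/-- The law of large numbers in direction `l` for walks that drift to `+∞` in this direction, and
the absence of positive speed for all others. -/
lemma IsRWRE.oneSided (hP : IsRWRE μ P) (l : Fin d → ℝ) :
    ∃ v : ℝ, ∀ᵐ q : RWSpace d ∂P,
      (Tendsto (fun n => dotR (q.2 n) l) atTop atTop →
        Tendsto (fun n : ℕ => dotR (q.2 n) l / n) atTop (𝓝 v)) ∧
      (¬ Tendsto (fun n => dotR (q.2 n) l) atTop atTop →
        ∀ δ > 0, ∀ᶠ n : ℕ in atTop, dotR (q.2 n) l ≤ δ * n) := by
  have := hP.1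
  have := hP.2.1.1
  have : IsProbabilityMeasure (P.map steps) :=
    Measure.isProbabilityMeasure_map measurable_steps.aemeasurable
  set w : ℝ := 1 + ∑ i, |l i| with hw
  have hw0 : 0 < w := by positivity
  let ht : Site d →+ ℝ :=
    { toFun := fun x => dotR x l / w
      map_zero' := by simp [dotR]
      map_add' := fun x y => by simp [dotR, add_mul, Finset.sum_add_distrib, add_div] }
  set lev : Fin d × Bool → ℝ := fun e => ht (stepVec d e) with hlev
  have hstep : ∀ e, |lev e| ≤ 1 := by
    rintro ⟨i, b⟩
    have h1 : |dotR (stepVec d (i, b)) l| = |l i| := by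
      cases b <;> simp [dotR, stepVec, Pi.single_apply]
    have h2 : |l i| ≤ w := by
      have := Finset.single_le_sum (f := fun i => |l i|) (fun _ _ => abs_nonneg _)
        (Finset.mem_univ i)
      linarith
    change |dotR (stepVec d (i, b)) l / w| ≤ 1
    rw [abs_div, abs_of_pos hw0, h1, div_le_one hw0]
    exact h2
  have hyp : Hyp lev (P.map steps) := by
    refine Hyp.of_env (stepVec d) μ measurable_stepProb (fun g => (sum_stepProb g).le)
      (fun l => ?_) ht (fun _ => rfl) hstep
    rw [IsRWRE.map_cyl hP, iid_eq hP.2.1]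
  obtain ⟨v, hv⟩ := hyp.oneSided
  refine ⟨v * w, ?_⟩
  filter_upwards [ae_of_ae_map measurable_steps.aemeasurable hv, IsRWRE.ae_good hP] with q hq hg
  have hlv : ∀ n, dotR (q.2 n) l = lv lev (steps q) n * w := by
    intro n
    have h1 : ht (q.2 n) = lv lev (steps q) n := by
      rw [hg.eq_endp n, endp, zero_add, map_list_sum, lv, lvl, List.map_map]
      rfl
    rw [← h1]
    exact (div_mul_cancel₀ _ hw0.ne').symm
  simp only [hlv, tendsto_mul_const_atTop_of_pos hw0]
  refine ⟨fun ht => ?_, fun ht δ hδ => ?_⟩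
  · simp only [mul_div_right_comm]
    exact (hq.1 ht).mul_const w
  · filter_upwards [hq.2 ht (δ / w) (by positivity)] with n hn
    calc lv lev (steps q) n * w ≤ δ / w * n * w := by gcongr
      _ = δ * n := by field_simp

/-- The strong law for `X_n · l`, with one speed for each of the two directions. -/
lemma IsRWRE.ae_tendsto (hP : IsRWRE μ P) (l : Fin d → ℝ) :
    ∃ vp vm : ℝ, ∀ᵐ q : RWSpace d ∂P,
      (Tendsto (fun n => dotR (q.2 n) l) atTop atTop →
        Tendsto (fun n : ℕ => dotR (q.2 n) l / n) atTop (𝓝 vp)) ∧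
      (Tendsto (fun n => dotR (q.2 n) l) atTop atBot →
        Tendsto (fun n : ℕ => dotR (q.2 n) l / n) atTop (𝓝 vm)) ∧
      (¬ Tendsto (fun n => dotR (q.2 n) l) atTop atTop →
        ¬ Tendsto (fun n => dotR (q.2 n) l) atTop atBot →
        Tendsto (fun n : ℕ => dotR (q.2 n) l / n) atTop (𝓝 0)) := by
  obtain ⟨vp, hvp⟩ := IsRWRE.oneSided hP l
  obtain ⟨vm, hvm⟩ := IsRWRE.oneSided hP (-l)
  have hneg : ∀ x : Site d, dotR x (-l) = -dotR x l := fun x => by simp [dotR]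
  refine ⟨vp, -vm, ?_⟩
  filter_upwards [hvp, hvm] with q h1 h2
  simp only [hneg, tendsto_neg_atTop_iff, neg_div] at h2
  refine ⟨h1.1, fun h => ?_, fun h h' => ?_⟩
  · simpa using (h2.1 h).neg
  · rw [Metric.tendsto_atTop']
    intro ε hε
    obtain ⟨N, hN⟩ := eventually_atTop.1 ((h1.2 h (ε / 2) (by positivity)).and
      ((h2.2 h' (ε / 2) (by positivity)).and (eventually_gt_atTop 0)))
    refine ⟨N, fun n hn => ?_⟩
    obtain ⟨a1, a2, a3⟩ := hN n hn.le
    have a3' : (0 : ℝ) < n := by exact_mod_cast a3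
    rw [dist_zero_right, Real.norm_eq_abs, abs_div, abs_of_pos a3', div_lt_iff₀ a3', abs_lt]
    constructor <;> nlinarith

end Walk

end RWLaw

/-- there are deterministic `v₊(ℓ), v₋(ℓ)` so that `P`-a.s.
`X_n·ℓ/n → v₊ 1_{A₊} + v₋ 1_{A₋}` (and hence the limit is `0` off `A₊ ∪ A₋`). -/
theorem stmt2 {d : ℕ} (hd : 2 ≤ d) (μ : Measure (EnvDist d))
    (P : Measure (RWSpace d)) (hP : IsRWRE μ P) (l : Fin d → ℝ) (hl : l ≠ 0) :
    ∃ vp vm : ℝ,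
      P {q : RWSpace d |
        Tendsto (fun n => dotR (q.2 n) l / n) atTop
          (𝓝 (if Tendsto (fun n => dotR (q.2 n) l) atTop atTop then vp
              else if Tendsto (fun n => dotR (q.2 n) l) atTop atBot then vm
              else 0))} = 1 := by
  have := hP.1
  have : Nonempty (Fin d × Bool) := ⟨(⟨0, by omega⟩, true)⟩
  obtain ⟨vp, vm, h⟩ := RWLaw.IsRWRE.ae_tendsto hP l
  refine ⟨vp, vm, ?_⟩
  rw [← measure_univ (μ := P)]
  refine measure_congr (eventuallyEq_univ.2 ?_)
  filter_upwards [h] with q hq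
  split_ifs with h1 h2
  · exact hq.1 h1
  · exact hq.2.1 h2
  · exact hq.2.2 h1 h2
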